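/- Let (X, μ) be a topological space with a Borel measure μ such that X is σ-finite with respect to μ, and suppose (Y, d, H^h) satisfies property (H∞). If f : X → Y is a measurable surjection, then there exists a set N ⊆ X with μ(N) = 0 and H^h(f(N)) > 0. Moreover, if in addition the topology of X has a countable basis and points of X are closed, and f has the property that for every closed set F ⊆ Y the preimage f⁻¹(F) is a countable union of closed sets, then N can be chosen to be perfect. -/

import Mathlib

open MeasureTheory Set Filter Topology
open scoped NNReal ENNReal

universe u v

/-- A Hausdorff (gauge) function `h : [0,∞) → [0,∞]`: nondecreasing, right-continuous,
and positive on positive arguments. -/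
structure IsHausdorffFunction (h : ℝ≥0 → ℝ≥0∞) : Prop where
  mono : Monotone h
  right_continuous : ∀ t : ℝ≥0, ContinuousWithinAt h (Set.Ici t) t
  pos : ∀ t : ℝ≥0, 0 < t → 0 < h t

/-- `h` is of finite order: `limsup_{t→0+} h(3t)/h(t) < ∞`. -/
def FiniteOrder (h : ℝ≥0 → ℝ≥0∞) : Prop :=
  Filter.limsup (fun t : ℝ≥0 => h (3 * t) / h t) (nhdsWithin 0 (Set.Ioi 0)) < ⊤

/-- The Hausdorff (outer) measure built from the gauge `h`:
`H^h(E) = sup_{δ>0} inf { Σ h(diam Uᵢ) : E ⊆ ⋃ Uᵢ, diam Uᵢ ≤ δ }`. -/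
noncomputable def hausdorffM {Z : Type*} [EMetricSpace Z] (h : ℝ≥0 → ℝ≥0∞) :
    MeasureTheory.OuterMeasure Z :=
  MeasureTheory.OuterMeasure.mkMetric (fun d => h d.toNNReal)

/-- A set `S` is σ-finite with respect to an outer measure `μ` if it is a countable union
of Carathéodory-measurable sets of finite measure. -/
def SigmaFiniteSet {Z : Type*} (μ : MeasureTheory.OuterMeasure Z) (S : Set Z) : Prop :=
  ∃ A : ℕ → Set Z, (∀ n, μ.IsCaratheodory (A n) ∧ μ (A n) < ⊤) ∧ S = ⋃ n, A n

/-- A metric space has finite structural dimension if for every `ξ > 0` there are `N` and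
`δ₀ > 0` such that every set of diameter `δ ≤ δ₀` can be covered by `N` sets of diameter
at most `ξ·δ`. -/
def FiniteStructuralDim (Z : Type*) [EMetricSpace Z] : Prop :=
  ∀ ξ : ℝ≥0, 0 < ξ → ∃ (N : ℕ) (δ₀ : ℝ≥0), 0 < δ₀ ∧
    ∀ s : Set Z, EMetric.diam s ≤ δ₀ →
      ∃ U : Fin N → Set Z, s ⊆ ⋃ i, U i ∧ ∀ i, EMetric.diam (U i) ≤ ξ * EMetric.diam s

/-- Property (H) for a subspace `Y` of the complete separable metric space `Z`. -/
structure PropertyH {Z : Type*} [MetricSpace Z] (Y : Set Z) (h : ℝ≥0 → ℝ≥0∞) : Prop where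
  complete : CompleteSpace Z
  separable : TopologicalSpace.SeparableSpace Z
  analytic : MeasureTheory.AnalyticSet Y
  hausdorff : IsHausdorffFunction h
  cont : Continuous h
  zero : h 0 = 0
  alt : FiniteOrder h ∨ FiniteStructuralDim Z ∨ ∀ x y z : Z, dist x z ≤ max (dist x y) (dist y z)

/-- Property (H∞): property (H) together with non-σ-finiteness of `Y` w.r.t. `H^h`. -/
def PropertyHInf {Z : Type*} [MetricSpace Z] (Y : Set Z) (h : ℝ≥0 → ℝ≥0∞) : Prop :=
  PropertyH Y h ∧ ¬ SigmaFiniteSet (hausdorffM h) Y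

/-- Property (Aκ): `X` is a union of κ-many measurable sets of finite measure, and
κ-many null sets always union to a null set. -/
def PropertyA {X : Type u} (μ : MeasureTheory.OuterMeasure X) (κ : Cardinal.{u}) : Prop :=
  (∃ (ι : Type u) (A : ι → Set X), Cardinal.mk ι = κ ∧ (⋃ i, A i) = Set.univ ∧
      ∀ i, μ.IsCaratheodory (A i) ∧ μ (A i) < ⊤) ∧
  ∀ (ι : Type u) (A : ι → Set X), Cardinal.mk ι = κ → (∀ i, μ (A i) = 0) → μ (⋃ i, A i) = 0

/-- A set is perfect if it is closed and every open set meeting it meets it in an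
infinite set. -/
def PerfectSet {X : Type*} [TopologicalSpace X] (C : Set X) : Prop :=
  IsClosed C ∧ ∀ O : Set X, IsOpen O → (O ∩ C).Nonempty → (O ∩ C).Infinite

/-- The gauge `d ↦ d^s`. -/
noncomputable def sGauge (s : ℝ≥0) : ℝ≥0 → ℝ≥0∞ := fun d => (d : ℝ≥0∞) ^ (s : ℝ)

/-- Hausdorff–Besicovitch dimension: the supremum of all `s ≥ 0` with `H^{d^s}(E) > 0`. -/
noncomputable def hDim {Z : Type*} [EMetricSpace Z] (E : Set Z) : ℝ≥0∞ :=
  ⨆ (s : ℝ≥0) (_ : 0 < hausdorffM (sGauge s) E), (s : ℝ≥0∞)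

/-! The pushforward under `f` of a finite measure equivalent to `μ` is a finite Borel measure `m` on
`Z`, so it suffices to find a compact `K ⊆ Y` with `m K = 0` and `H^h(K) > 0`.

Each of the alternatives in property (H) yields a covering theorem of Vitali type for `h`. Applied
twice to a fine cover of a set of non-σ-finite measure, it produces a finite separated subfamily
whose total gauge is as large as that of a prescribed ball, while the members touching any ball `s`
have total gauge at most a constant multiple of `h` of the radius of `s`. On the other hand, the
points where the density of `m` with respect to `h` is not arbitrarily small form a σ-finite set.
Hence a small piece of `Y`, coded by a set of sequences, can be replaced by finitely many smaller
pieces with the same total gauge, in balls of much smaller `m`-measure, that fix one more coordinate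
of the code. Iteration gives a tree whose `m`-measures tend to zero. Its limit set `K` is compact,
since every coordinate of the code takes finitely many values, and the bound on the members touching
a ball, propagated through the tree, shows that `K` has positive content.

The preimage of `K` is a countable union of closed sets, one of which has an image of positive
measure, and this survives the removal of the countable part in the Cantor–Bendixson theorem.
-/

namespace HausdorffGauge

/-! ### Shrinking sequences in Baire space -/

section BaireSpace

variable {P : ℕ → Set (ℕ → ℕ)} {b : ℕ → ℕ}

theorem isCompact_Iic_baire (b : ℕ → ℕ) : IsCompact (Iic b) := by
  rw [← Icc_bot]
  exact isCompact_Icc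

theorem isCompact_iInter_closure (hb : ∀ j, ∀ σ ∈ P (j + 1), σ j ≤ b j) :
    IsCompact (⋂ j, closure (P j)) := by
  refine (isCompact_Iic_baire b).of_isClosed_subset (isClosed_iInter fun j => isClosed_closure)
    fun σ hσ j => ?_
  have hclosed : IsClosed {σ : ℕ → ℕ | σ j ≤ b j} :=
    isClosed_le (continuous_apply j) continuous_const
  exact closure_minimal (hb j) hclosed (mem_iInter.1 hσ (j + 1))

theorem exists_subset_of_iInter_closure_subset (hP : Antitone P)
    (hb : ∀ j, ∀ σ ∈ P (j + 1), σ j ≤ b j) {O : Set (ℕ → ℕ)} (hO : IsOpen O)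
    (hPO : ⋂ j, closure (P j) ⊆ O) : ∃ j, P j ⊆ O := by
  by_contra! hcon
  choose s hs hsO using fun j => not_subset.1 (hcon j)
  have hbound : ∀ j, s j ∈ Iic fun i => b i + ∑ l ∈ Finset.range (i + 1), s l i := fun j i => by
    rcases lt_or_ge i j with hij | hji
    · exact (hb i _ (hP hij (hs j))).trans (Nat.le_add_right _ _)
    · exact (Finset.single_le_sum_of_canonicallyOrdered (f := fun l => s l i)
        (Finset.mem_range_succ_iff.2 hji)).trans (Nat.le_add_left _ _)
  obtain ⟨τ, -, φ, hφ, hlim⟩ := (isCompact_Iic_baire _).tendsto_subseq hbound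
  have hτ : τ ∈ ⋂ j, closure (P j) := mem_iInter.2 fun j => by
    refine mem_closure_of_tendsto hlim ?_
    filter_upwards [eventually_ge_atTop j] with l hl
    exact hP (hl.trans (hφ.id_le l)) (hs _)
  obtain ⟨l, hl⟩ := (hlim.eventually (hO.mem_nhds (hPO hτ))).exists
  exact hsO _ hl

end BaireSpace

/-! ### Capacitability of analytic sets -/

section Capacitability

variable {Z : Type*} [MeasurableSpace Z] {g : (ℕ → ℕ) → Z} {ν : Measure Z} {c : ℝ≥0∞}

theorem exists_lt_measure_image_inter_le {P : Set (ℕ → ℕ)} (hc : c < ν (g '' P)) (j : ℕ) :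
    ∃ N, c < ν (g '' (P ∩ {σ | σ j ≤ N})) := by
  have hmono : Monotone fun N => g '' (P ∩ {σ | σ j ≤ N}) := fun _ _ hab =>
    image_mono fun _ hσ => ⟨hσ.1, hσ.2.trans hab⟩
  have hunion : g '' P = ⋃ N, g '' (P ∩ {σ | σ j ≤ N}) := by
    rw [← image_iUnion, ← inter_iUnion]
    exact congrArg _ (inter_eq_left.2 fun σ _ => mem_iUnion.2 ⟨σ j, le_refl (σ j)⟩).symm
  rwa [hunion, hmono.measure_iUnion, lt_iSup_iff] at hc

theorem exists_antitone_lt_measure_image (hc : c < ν (range g)) :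
    ∃ (P : ℕ → Set (ℕ → ℕ)) (b : ℕ → ℕ), Antitone P ∧ (∀ j, ∀ σ ∈ P (j + 1), σ j ≤ b j) ∧
      ∀ j, c < ν (g '' P j) := by
  choose N hN using fun (Q : {Q : Set (ℕ → ℕ) // c < ν (g '' Q)}) j =>
    exists_lt_measure_image_inter_le Q.2 j
  let P : ℕ → {Q : Set (ℕ → ℕ) // c < ν (g '' Q)} := fun j =>
    j.rec ⟨univ, by rwa [image_univ]⟩ fun j Q => ⟨Q ∩ {σ | σ j ≤ N Q j}, hN Q j⟩
  exact ⟨fun j => (P j).1, fun j => N (P j) j,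
    antitone_nat_of_succ_le fun _ _ hσ => hσ.1, fun _ _ hσ => hσ.2, fun j => (P j).2⟩

variable [TopologicalSpace Z]

theorem exists_isCompact_le_measure_of_lt {s : Set Z} (hs : AnalyticSet s) [ν.OuterRegular]
    (hc : c < ν s) : ∃ K ⊆ s, IsCompact K ∧ c ≤ ν K := by
  rw [AnalyticSet] at hs
  rcases hs with rfl | ⟨g, hg, rfl⟩
  · simp at hc
  obtain ⟨P, b, hP, hb, hPc⟩ := exists_antitone_lt_measure_image hc
  refine ⟨g '' ⋂ j, closure (P j), image_subset_range _ _,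
    (isCompact_iInter_closure hb).image hg, ?_⟩
  rw [measure_eq_iInf_isOpen]
  refine le_iInf₂ fun O hKO => le_iInf fun hO => ?_
  obtain ⟨j, hj⟩ := exists_subset_of_iInter_closure_subset hP hb (hO.preimage hg)
    (image_subset_iff.1 hKO)
  exact (hPc j).le.trans (measure_mono (image_subset_iff.2 hj))

theorem nullMeasurableSet_of_analyticSet [T2Space Z] [OpensMeasurableSpace Z] {s : Set Z}
    (hs : AnalyticSet s) [ν.OuterRegular] [IsFiniteMeasure ν] : NullMeasurableSet s ν := by
  rcases eq_or_ne (ν s) 0 with hs0 | hs0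
  · exact .of_null hs0
  obtain ⟨u, -, hu, hlim⟩ := exists_seq_strictMono_tendsto' (pos_iff_ne_zero.2 hs0)
  choose K hKs hK hKu using fun n => exists_isCompact_le_measure_of_lt hs (hu n).2
  have hmeas : NullMeasurableSet (⋃ n, K n) ν :=
    (MeasurableSet.iUnion fun n => (hK n).measurableSet).nullMeasurableSet
  have hle : ν s ≤ ν (⋃ n, K n) :=
    le_of_tendsto' hlim fun n => (hKu n).trans (measure_mono (subset_iUnion _ _))
  exact hmeas.congr
    (ae_eq_of_subset_of_measure_ge (iUnion_subset hKs) hle hmeas (measure_ne_top _ _))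

end Capacitability

/-! ### Size-`δ` contents of a continuous gauge -/

/-- A continuous Hausdorff function with value `0` at `0`: the gauges of property (H). -/
structure ContinuousGauge (h : ℝ≥0 → ℝ≥0∞) : Prop extends IsHausdorffFunction h where
  continuous : Continuous h
  map_zero : h 0 = 0

theorem ContinuousGauge.exists_pos_le_map_lt {h : ℝ≥0 → ℝ≥0∞} (hG : ContinuousGauge h)
    {a : ℝ≥0∞} (ha : 0 < a) {b : ℝ≥0} (hb : 0 < b) : ∃ r, 0 < r ∧ r ≤ b ∧ h r < a := by
  have h_near : ∀ᶠ r in 𝓝 (0 : ℝ≥0), h r < a :=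
    hG.continuous.continuousAt.eventually_lt_const (by rwa [hG.map_zero])
  obtain ⟨r, hr, hr0, hrb⟩ :=
    ((h_near.filter_mono nhdsWithin_le_nhds).and (Ioo_mem_nhdsGT hb)).exists
  exact ⟨r, hr0, hrb.le, hr⟩

/-- The size-`δ` content `E ↦ inf {∑ h(diam Uᵢ) : E ⊆ ⋃ Uᵢ, diam Uᵢ ≤ δ}`, whose supremum over
`δ > 0` is the Hausdorff measure of `h`. -/
noncomputable def hausdorffPre {Z : Type*} [EMetricSpace Z] (h : ℝ≥0 → ℝ≥0∞) (δ : ℝ≥0) :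
    OuterMeasure Z :=
  OuterMeasure.mkMetric'.pre (fun s => h (Metric.ediam s).toNNReal) δ

section Content

variable {Z : Type*} [EMetricSpace Z] {h : ℝ≥0 → ℝ≥0∞}

theorem hausdorffPre_le {δ : ℝ≥0} {E : Set Z} (hE : Metric.ediam E ≤ δ) :
    hausdorffPre h δ E ≤ h (Metric.ediam E).toNNReal :=
  OuterMeasure.mkMetric'.pre_le hE

theorem hausdorffPre_le_of_ediam_le (hmono : Monotone h) {δ r : ℝ≥0} {E : Set Z}
    (hE : Metric.ediam E ≤ r) (hr : r ≤ δ) : hausdorffPre h δ E ≤ h r :=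
  (hausdorffPre_le (hE.trans (by exact_mod_cast hr))).trans
    (hmono (ENNReal.toNNReal_mono ENNReal.coe_ne_top hE))

theorem exists_cover_of_hausdorffPre_lt (h0 : h 0 = 0) {δ : ℝ≥0} {E : Set Z} {a : ℝ≥0∞}
    (ha : hausdorffPre h δ E < a) :
    ∃ U : ℕ → Set Z, E ⊆ ⋃ n, U n ∧ (∀ n, Metric.ediam (U n) ≤ δ) ∧
      ∑' n, h (Metric.ediam (U n)).toNNReal < a := by
  rw [hausdorffPre, OuterMeasure.mkMetric'.pre, OuterMeasure.boundedBy_apply] at ha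
  simp only [iInf_lt_iff] at ha
  obtain ⟨U, hEU, hsum⟩ := ha
  have hU n : Metric.ediam (U n) ≤ δ := by
    rcases (U n).eq_empty_or_nonempty with hn | hn
    · simp [hn]
    · by_contra hδ
      refine (ENNReal.ne_top_of_tsum_ne_top hsum.ne_top n) ?_
      simp [hn, extend, hδ]
  refine ⟨U, hEU, hU, (ENNReal.tsum_le_tsum fun n => ?_).trans_lt hsum⟩
  rcases (U n).eq_empty_or_nonempty with hn | hn
  · simp [hn, h0]
  · simp [hn, extend, hU n]

theorem hausdorffM_le {E : Set Z} {M : ℝ≥0∞} (hM : ∀ δ : ℝ≥0, 0 < δ → hausdorffPre h δ E ≤ M) :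
    hausdorffM h E ≤ M := by
  rw [hausdorffM, OuterMeasure.mkMetric, OuterMeasure.mkMetric']
  simp only [OuterMeasure.iSup_apply]
  refine iSup₂_le fun r hr => ?_
  obtain ⟨δ, hδ, hδr⟩ := ENNReal.lt_iff_exists_nnreal_btwn.1 hr
  exact (OuterMeasure.mkMetric'.mono_pre _ hδr.le E).trans (hM δ (by exact_mod_cast hδ))

theorem hausdorffPre_le_hausdorffM {δ : ℝ≥0} (hδ : 0 < δ) (E : Set Z) :
    hausdorffPre h δ E ≤ hausdorffM h E := by
  rw [hausdorffM, OuterMeasure.mkMetric, OuterMeasure.mkMetric']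
  simp only [OuterMeasure.iSup_apply]
  exact le_iSup₂ (f := fun (r : ℝ≥0∞) (_ : r > 0) => OuterMeasure.mkMetric'.pre
    (fun s : Set Z => h (Metric.ediam s).toNNReal) r E) δ (by simpa using hδ)

-- A cover of total weight below `h δ` consists of sets of diameter less than `δ`.
theorem hausdorffPre_le_of_lt_map (hmono : Monotone h) (h0 : h 0 = 0) {δ δ' : ℝ≥0} {E : Set Z}
    (hE : hausdorffPre h δ' E < h δ) : hausdorffPre h δ E ≤ hausdorffPre h δ' E := by
  refine le_of_forall_gt fun a ha => ?_
  obtain ⟨U, hEU, hU, hsum⟩ := exists_cover_of_hausdorffPre_lt h0 (lt_min ha hE)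
  have hUδ n : Metric.ediam (U n) ≤ δ := by
    by_contra! hδ
    have hle : h δ ≤ h (Metric.ediam (U n)).toNNReal :=
      hmono (ENNReal.toNNReal_mono (ne_top_of_le_ne_top ENNReal.coe_ne_top (hU n)) hδ.le)
    exact (hle.trans (ENNReal.le_tsum n)).not_gt (hsum.trans_le (min_le_right _ _))
  calc hausdorffPre h δ E
      ≤ ∑' n, hausdorffPre h δ (U n) := (measure_mono hEU).trans (measure_iUnion_le _)
    _ ≤ ∑' n, h (Metric.ediam (U n)).toNNReal :=
        ENNReal.tsum_le_tsum fun n => hausdorffPre_le (hUδ n)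
    _ < a := hsum.trans_le (min_le_left _ _)

theorem hausdorffM_countable (h0 : h 0 = 0) {S : Set Z} (hS : S.Countable) :
    hausdorffM h S = 0 := by
  rw [← biUnion_of_singleton S]
  refine (measure_biUnion_null_iff hS).2 fun x _ => ?_
  exact le_antisymm (hausdorffM_le fun δ _ => (hausdorffPre_le (by simp)).trans (by simp [h0]))
    bot_le

end Content

/-! ### σ-finite covers -/

/-- `E` is covered by countably many sets of finite outer measure. Unlike in `SigmaFiniteSet`, the
covering sets need not be measurable. -/
def HasSigmaFiniteCover {α : Type*} (M : OuterMeasure α) (E : Set α) : Prop :=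
  ∃ A : ℕ → Set α, E ⊆ ⋃ n, A n ∧ ∀ n, M (A n) < ⊤

namespace HasSigmaFiniteCover

variable {α : Type*} {M : OuterMeasure α} {E F : Set α}

theorem mono (hEF : E ⊆ F) (hF : HasSigmaFiniteCover M F) : HasSigmaFiniteCover M E :=
  let ⟨A, hFA, hA⟩ := hF
  ⟨A, hEF.trans hFA, hA⟩

theorem of_lt_top (hE : M E < ⊤) : HasSigmaFiniteCover M E :=
  ⟨fun _ => E, (iUnion_const E).ge, fun _ => hE⟩

theorem empty : HasSigmaFiniteCover M ∅ := of_lt_top (by simp)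

theorem iUnion_nat {E : ℕ → Set α} (hE : ∀ n, HasSigmaFiniteCover M (E n)) :
    HasSigmaFiniteCover M (⋃ n, E n) := by
  choose A hEA hA using hE
  refine ⟨fun k => A k.unpair.1 k.unpair.2, iUnion_subset fun n x hx => ?_, fun k => hA _ _⟩
  obtain ⟨m, hm⟩ := mem_iUnion.1 (hEA n hx)
  exact mem_iUnion.2 ⟨Nat.pair n m, by simpa using hm⟩

theorem biUnion {ι : Type*} {s : Set ι} (hs : s.Countable) {E : ι → Set α}
    (hE : ∀ i ∈ s, HasSigmaFiniteCover M (E i)) : HasSigmaFiniteCover M (⋃ i ∈ s, E i) := by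
  rcases s.eq_empty_or_nonempty with rfl | hne
  · simpa using empty
  · obtain ⟨f, rfl⟩ := hs.exists_eq_range hne
    rw [biUnion_range]
    exact iUnion_nat fun n => hE _ (mem_range_self n)

theorem union (hE : HasSigmaFiniteCover M E) (hF : HasSigmaFiniteCover M F) :
    HasSigmaFiniteCover M (E ∪ F) := by
  rw [← sUnion_pair, sUnion_eq_biUnion]
  exact biUnion (to_countable _) (by simp [hE, hF])

end HasSigmaFiniteCover

/-! ### Balls -/

/-- A closed ball together with the choice of its center and its positive radius. -/
structure Ball (Z : Type*) where
  center : Z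
  radius : ℝ≥0
  radius_pos : 0 < radius

namespace Ball

variable {Z : Type*} [MetricSpace Z] {p q : Ball Z}

/-- The underlying closed set of a ball. -/
def carrier (p : Ball Z) : Set Z := Metric.closedBall p.center p.radius

/-- Two balls meet if they have a common point. -/
def Meets (p q : Ball Z) : Prop := (p.carrier ∩ q.carrier).Nonempty

theorem mem_carrier {x : Z} : x ∈ p.carrier ↔ dist x p.center ≤ p.radius := Iff.rfl

theorem center_mem_carrier (p : Ball Z) : p.center ∈ p.carrier :=
  Metric.mem_closedBall_self p.radius.2

theorem meets_self (p : Ball Z) : p.Meets p :=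
  ⟨p.center, p.center_mem_carrier, p.center_mem_carrier⟩

theorem Meets.symm (hpq : p.Meets q) : q.Meets p := by rwa [Meets, inter_comm]

theorem isClosed_carrier (p : Ball Z) : IsClosed p.carrier := Metric.isClosed_closedBall

theorem ediam_closedBall_le (x : Z) (r : ℝ≥0) :
    Metric.ediam (Metric.closedBall x r) ≤ (2 * r : ℝ≥0) := by
  refine Metric.ediam_le fun a ha b hb => ?_
  rw [edist_le_coe, ← NNReal.coe_le_coe, coe_nndist]
  have := dist_triangle_right a b x
  rw [Metric.mem_closedBall] at ha hb
  push_cast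
  linarith

variable [TopologicalSpace.SeparableSpace Z] [Nonempty Z]

variable (Z) in
/-- A countable family of balls, with centers and radii in fixed dense sequences, which contains
arbitrarily good approximations of every ball. -/
def rational : Set (Ball Z) :=
  {p | p.center ∈ range (TopologicalSpace.denseSeq Z) ∧
    p.radius ∈ range (TopologicalSpace.denseSeq ℝ≥0)}

theorem countable_rational : (rational Z).Countable :=
  MapsTo.countable_of_injOn (f := fun p : Ball Z => (p.center, p.radius))
    (fun _ hp => hp) (by rintro ⟨⟩ _ ⟨⟩ _ h; simpa using h)
    ((countable_range (TopologicalSpace.denseSeq Z)).prod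
      (countable_range (TopologicalSpace.denseSeq ℝ≥0)))

theorem exists_rational_superset {x : Z} {d b : ℝ≥0} (hdb : d < b) :
    ∃ p ∈ rational Z, Metric.closedBall x d ⊆ Metric.ball p.center p.radius ∧
      d < p.radius ∧ p.radius < b := by
  obtain ⟨_, ⟨m, rfl⟩, hd, hb⟩ := (TopologicalSpace.denseRange_denseSeq ℝ≥0).exists_between hdb
  obtain ⟨n, hn⟩ := (TopologicalSpace.denseRange_denseSeq Z).exists_dist_lt x
    (sub_pos.2 (NNReal.coe_lt_coe.2 hd))
  refine ⟨⟨_, _, bot_le.trans_lt hd⟩, ⟨mem_range_self n, mem_range_self m⟩, ?_, hd, hb⟩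
  exact Metric.closedBall_subset_ball' (lt_sub_iff_add_lt'.1 hn)

theorem exists_rational_mem (x : Z) {δ : ℝ≥0} (hδ : 0 < δ) :
    ∃ p ∈ rational Z, p.radius < δ ∧ x ∈ p.carrier := by
  obtain ⟨p, hp, hxp, -, hpδ⟩ := exists_rational_superset (x := x) hδ
  exact ⟨p, hp, hpδ, Metric.ball_subset_closedBall (hxp (by simp))⟩

end Ball

section RationalCover

variable {Z : Type*} [MetricSpace Z] [TopologicalSpace.SeparableSpace Z] [Nonempty Z]
  {h : ℝ≥0 → ℝ≥0∞}

theorem exists_rational_superset_map_le (hcont : Continuous h) {U : Set Z}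
    (hU : Metric.ediam U ≠ ⊤) {ε : ℝ≥0∞} (hε : ε ≠ 0) (hh : h (Metric.ediam U).toNNReal ≠ ⊤) :
    ∃ p ∈ Ball.rational Z, U ⊆ Metric.ball p.center p.radius ∧
      h p.radius ≤ h (Metric.ediam U).toNNReal + ε := by
  set d := (Metric.ediam U).toNNReal
  have h_near : ∀ᶠ r in 𝓝[>] d, h r < h d + ε :=
    (hcont.continuousAt.eventually_lt_const (ENNReal.lt_add_right hh hε)).filter_mono
      nhdsWithin_le_nhds
  obtain ⟨b, hb, hdb⟩ := mem_nhdsGT_iff_exists_Ioo_subset.1 h_near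
  obtain ⟨x, hx⟩ : ∃ x, U ⊆ Metric.closedBall x d := by
    rcases U.eq_empty_or_nonempty with rfl | ⟨x, hx⟩
    · exact ⟨Classical.arbitrary Z, empty_subset _⟩
    · refine ⟨x, fun z hz => ?_⟩
      rw [Metric.mem_closedBall, ← coe_nndist, NNReal.coe_le_coe, ← ENNReal.coe_le_coe,
        ← edist_nndist, ENNReal.coe_toNNReal hU]
      exact Metric.edist_le_ediam_of_mem hz hx
  obtain ⟨p, hp, hUp, hdp, hpb⟩ := Ball.exists_rational_superset (x := x) hb
  exact ⟨p, hp, hx.trans hUp, (hdb ⟨hdp, hpb⟩).le⟩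

theorem exists_rational_cover (hcont : Continuous h) (h0 : h 0 = 0) {δ : ℝ≥0} {E : Set Z}
    {a : ℝ≥0∞} (ha : hausdorffPre h δ E < a) :
    ∃ p : ℕ → Ball Z, (∀ n, p n ∈ Ball.rational Z) ∧
      E ⊆ ⋃ n, Metric.ball (p n).center (p n).radius ∧ ∑' n, h (p n).radius < a := by
  obtain ⟨U, hEU, hU, hsum⟩ := exists_cover_of_hausdorffPre_lt h0 ha
  obtain ⟨ε, hε0, hε⟩ := ENNReal.exists_pos_sum_of_countable' (tsub_pos_of_lt hsum).ne' ℕ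
  choose p hp hUp hhp using fun n => exists_rational_superset_map_le hcont
    (ne_top_of_le_ne_top ENNReal.coe_ne_top (hU n)) (hε0 n).ne'
    (ENNReal.ne_top_of_tsum_ne_top hsum.ne_top n)
  refine ⟨p, hp, hEU.trans (iUnion_mono hUp), ?_⟩
  calc ∑' n, h (p n).radius
      ≤ ∑' n, (h (Metric.ediam (U n)).toNNReal + ε n) := ENNReal.tsum_le_tsum hhp
    _ = ∑' n, h (Metric.ediam (U n)).toNNReal + ∑' n, ε n := ENNReal.tsum_add
    _ < a := by rw [add_comm]; exact lt_tsub_iff_right.1 hε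

end RationalCover

/-! ### Vitali systems -/

section VitaliSystem

variable {Z : Type*} [MetricSpace Z] {h : ℝ≥0 → ℝ≥0∞}

/-- Two balls are separated if no ball of at most the larger of their radii meets both. -/
def Ball.Separated (p q : Ball Z) : Prop :=
  ∀ s : Ball Z, s.radius ≤ max p.radius q.radius → s.Meets p → ¬ s.Meets q

/-- `p` touches `s` if it meets `s` and is at most as large. -/
def Ball.Touches (p s : Ball Z) : Prop := p.radius ≤ s.radius ∧ p.Meets s

/-- The points of the balls `p` that are linked to `q` by a chain in which `p` is dominated by some
`p'`, which touches a ball `s` that is dominated by `q`; all radii are at most `δ`. Such chains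
arise when a covering theorem is applied twice. -/
def doubleEnlargement (δ : ℝ≥0) (Dom : Ball Z → Ball Z → Prop) (q : Ball Z) : Set Z :=
  {z | ∃ p p' s : Ball Z, p.radius ≤ δ ∧ p'.radius ≤ δ ∧ s.radius ≤ δ ∧ z ∈ p.carrier ∧
    Dom p p' ∧ p'.Touches s ∧ Dom s q}

variable (Z h) in
/-- A covering theorem of Vitali type for the gauge `h`: every family of balls of radius at most
`scale` has a separated subfamily that dominates it, and the double enlargement of a ball has
content comparable to the gauge of its radius. This is all that the alternative in property (H) is
used for. -/
structure VitaliSystem where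
  const : ℝ≥0
  scale : ℝ≥0
  Dom : Ball Z → Ball Z → Prop
  one_le_const : 1 ≤ const
  scale_pos : 0 < scale
  map_scale_ne_top : h scale ≠ ⊤
  dom_refl : ∀ p : Ball Z, p.radius ≤ scale → Dom p p
  exists_separated : ∀ t : Set (Ball Z), (∀ p ∈ t, p.radius ≤ scale) →
    ∃ u ⊆ t, u.Pairwise Ball.Separated ∧ ∀ p ∈ t, ∃ q ∈ u, Dom p q
  enlargement_le : ∀ q : Ball Z, q.radius ≤ scale →
    hausdorffPre h 1 (doubleEnlargement scale Dom q) ≤ const * h q.radius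

namespace VitaliSystem

variable (V : VitaliSystem Z h)

/-- The double enlargement of `q` with respect to the domination relation of `V`. -/
def enlargement (q : Ball Z) : Set Z := doubleEnlargement V.scale V.Dom q

variable {V} {p p' s q : Ball Z}

theorem carrier_subset_enlargement_of_touches (hp : p.radius ≤ V.scale) (hp' : p'.radius ≤ V.scale)
    (hs : s.radius ≤ V.scale) (hpp' : V.Dom p p') (hp's : p'.Touches s) (hsq : V.Dom s q) :
    p.carrier ⊆ V.enlargement q :=
  fun _ hz => ⟨p, p', s, hp, hp', hs, hz, hpp', hp's, hsq⟩

theorem carrier_subset_enlargement (hp : p.radius ≤ V.scale) (hq : q.radius ≤ V.scale)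
    (hpq : V.Dom p q) : p.carrier ⊆ V.enlargement q :=
  carrier_subset_enlargement_of_touches hp hq hq hpq ⟨le_rfl, q.meets_self⟩ (V.dom_refl q hq)

theorem exists_const_mul_lt (hG : ContinuousGauge h) (V : VitaliSystem Z h) {b : ℝ≥0∞}
    (hb : 0 < b) : ∃ δ, 0 < δ ∧ δ ≤ V.scale ∧ V.const * h δ < b := by
  have hC : (V.const : ℝ≥0∞) ≠ 0 :=
    ENNReal.coe_ne_zero.2 (zero_lt_one.trans_le V.one_le_const).ne'
  obtain ⟨δ, hδ, hδV, hlt⟩ := hG.exists_pos_le_map_lt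
    (ENNReal.div_pos hb.ne' (ENNReal.coe_ne_top (r := V.const))) V.scale_pos
  exact ⟨δ, hδ, hδV, by
    rwa [mul_comm, ← ENNReal.lt_div_iff_mul_lt (Or.inl hC) (Or.inl ENNReal.coe_ne_top)]⟩

end VitaliSystem

theorem exists_separated_subfamily {B : Ball Z → Set Z} (hB : ∀ p, p.carrier ⊆ B p)
    (hsep : ∀ s p q : Ball Z, s.radius ≤ p.radius → s.Meets p → s.Meets q → (B p ∩ B q).Nonempty)
    {t : Set (Ball Z)} {size : Ball Z → ℝ≥0} {R : ℝ≥0} (hR : ∀ p ∈ t, size p ≤ R) :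
    ∃ u ⊆ t, u.Pairwise Ball.Separated ∧
      ∀ p ∈ t, ∃ q ∈ u, size p ≤ 2 * size q ∧ (B p ∩ B q).Nonempty := by
  obtain ⟨u, hut, hdisj, hcov⟩ := Vitali.exists_disjoint_subfamily_covering_enlargement
    B t (fun p => size p) 2 one_lt_two (fun _ _ => NNReal.coe_nonneg _) R
    (fun p hp => by exact_mod_cast hR p hp) (fun p _ => ⟨p.center, hB p p.center_mem_carrier⟩)
  refine ⟨u, hut, fun p hp q hq hpq s hs hsp hsq => ?_, fun p hp => ?_⟩
  · refine not_disjoint_iff_nonempty_inter.2 ?_ (hdisj hp hq hpq)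
    rcases le_max_iff.1 hs with hs | hs
    · exact hsep s p q hs hsp hsq
    · rw [inter_comm]
      exact hsep s q p hs hsq hsp
  · obtain ⟨q, hq, hpq, hle⟩ := hcov p hp
    exact ⟨q, hq, by exact_mod_cast hle, hpq⟩

/-- The domination relation used in general metric spaces. -/
def Ball.TripleDominated (p q : Ball Z) : Prop :=
  p.radius ≤ 2 * q.radius ∧
    (Metric.closedBall p.center (3 * p.radius) ∩ Metric.closedBall q.center (3 * q.radius)).Nonempty

theorem inter_closedBall_triple_nonempty {s p q : Ball Z} (hs : s.radius ≤ p.radius)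
    (hsp : s.Meets p) (hsq : s.Meets q) :
    (Metric.closedBall p.center (3 * p.radius) ∩
      Metric.closedBall q.center (3 * q.radius)).Nonempty := by
  obtain ⟨a, has, hap⟩ := hsp
  obtain ⟨b, hbs, hbq⟩ := hsq
  rw [Ball.mem_carrier] at *
  have : (s.radius : ℝ) ≤ p.radius := by exact_mod_cast hs
  refine ⟨b, Metric.mem_closedBall.2 ?_, Metric.mem_closedBall.2 ?_⟩
  · have := dist_triangle b s.center p.center
    have := dist_triangle s.center a p.center
    have := dist_comm a s.center
    linarith
  · linarith [q.radius.2]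

theorem doubleEnlargement_tripleDominated_subset (δ : ℝ≥0) (q : Ball Z) :
    doubleEnlargement δ Ball.TripleDominated q ⊆
      Metric.closedBall q.center (35 * q.radius : ℝ≥0) := by
  rintro z ⟨p, p', s, -, -, -, hz, ⟨hpp', a, hap, hap'⟩, ⟨hp's, b, hbp', hbs⟩, hsq, c, hcs, hcq⟩
  simp only [Ball.mem_carrier, Metric.mem_closedBall] at *
  have : (p.radius : ℝ) ≤ 2 * p'.radius := by exact_mod_cast hpp'
  have : (p'.radius : ℝ) ≤ s.radius := by exact_mod_cast hp's
  have : (s.radius : ℝ) ≤ 2 * q.radius := by exact_mod_cast hsq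
  have := dist_triangle z p.center q.center
  have := dist_triangle p.center p'.center q.center
  have := dist_triangle p'.center s.center q.center
  have := dist_triangle_left p.center p'.center a
  have := dist_triangle_left p'.center s.center b
  have := dist_triangle_left s.center q.center c
  push_cast
  linarith

theorem nonempty_vitaliSystem_of_closedBall_le (hG : ContinuousGauge h) {C δ₁ : ℝ≥0}
    (hδ₁ : 0 < δ₁) (hC : ∀ (x : Z) (r : ℝ≥0), 0 < r → r ≤ δ₁ →
      hausdorffPre h 1 (Metric.closedBall x (35 * r : ℝ≥0)) ≤ C * h r) :
    Nonempty (VitaliSystem Z h) := by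
  obtain ⟨δ, hδ, hδδ₁, hfin⟩ := hG.exists_pos_le_map_lt ENNReal.zero_lt_top hδ₁
  have subset_triple (p : Ball Z) : p.carrier ⊆ Metric.closedBall p.center (3 * p.radius) :=
    Metric.closedBall_subset_closedBall (by linarith [p.radius.2])
  exact ⟨{
    const := max 1 C
    scale := δ
    Dom := Ball.TripleDominated
    one_le_const := le_max_left _ _
    scale_pos := hδ
    map_scale_ne_top := hfin.ne
    dom_refl := fun p _ => ⟨le_mul_of_one_le_left' one_le_two, by
      rw [inter_self]
      exact ⟨_, subset_triple p p.center_mem_carrier⟩⟩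
    exists_separated := fun t ht => exists_separated_subfamily subset_triple
      (fun _ _ _ => inter_closedBall_triple_nonempty) ht
    enlargement_le := fun q hq =>
      (measure_mono (doubleEnlargement_tripleDominated_subset δ q)).trans <|
        (hC q.center q.radius q.radius_pos (hq.trans hδδ₁)).trans <| by
          gcongr
          exact le_max_right _ _ }⟩

theorem exists_map_three_pow_mul_le_of_finiteOrder (hpos : ∀ t, 0 < t → 0 < h t)
    (hfo : FiniteOrder h) :
    ∃ C b : ℝ≥0, 0 < b ∧
      ∀ (n : ℕ) (t : ℝ≥0), 0 < t → 3 ^ n * t < b → h (3 ^ n * t) ≤ C ^ n * h t := by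
  obtain ⟨C, hC, -⟩ := ENNReal.lt_iff_exists_nnreal_btwn.1 hfo
  obtain ⟨b, hb, hsub⟩ :=
    mem_nhdsGT_iff_exists_Ioo_subset.1 (Filter.eventually_lt_of_limsup_lt hC)
  have triple_le : ∀ t, 0 < t → t < b → h (3 * t) ≤ C * h t := fun t ht htb =>
    have hlt : h (3 * t) / h t < C := hsub ⟨ht, htb⟩
    (ENNReal.div_le_iff_le_mul (Or.inl (hpos t ht).ne')
      (Or.inr (bot_le.trans_lt hlt).ne')).1 hlt.le
  refine ⟨C, b, hb, fun n => ?_⟩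
  induction n with
  | zero => simp
  | succ n ih =>
    intro t ht htb
    have hlt : 3 ^ n * t < b :=
      lt_of_le_of_lt (by gcongr; exacts [by norm_num, n.le_succ]) htb
    calc h (3 ^ (n + 1) * t) = h (3 * (3 ^ n * t)) := by ring_nf
      _ ≤ C * h (3 ^ n * t) := triple_le _ (by positivity) hlt
      _ ≤ C * (C ^ n * h t) := by gcongr; exact ih t ht hlt
      _ = C ^ (n + 1) * h t := by ring

theorem nonempty_vitaliSystem_of_finiteOrder (hG : ContinuousGauge h) (hfo : FiniteOrder h) :
    Nonempty (VitaliSystem Z h) := by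
  obtain ⟨C, b, hb, hC⟩ := exists_map_three_pow_mul_le_of_finiteOrder hG.pos hfo
  obtain ⟨δ, hδ, hδb⟩ := exists_between (show 0 < min (1 / 70) (b / 81) by positivity)
  refine nonempty_vitaliSystem_of_closedBall_le hG (C := C ^ 4) hδ fun x r hr hrδ => ?_
  have hr70 : 70 * r ≤ 1 := by
    have : r < 1 / 70 := hrδ.trans_lt (hδb.trans_le (min_le_left _ _))
    linarith
  have hrb : 3 ^ 4 * r < b := by
    have : r < b / 81 := hrδ.trans_lt (hδb.trans_le (min_le_right _ _))
    linarith
  calc hausdorffPre h 1 (Metric.closedBall x (35 * r : ℝ≥0))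
      ≤ h (70 * r) := hausdorffPre_le_of_ediam_le hG.mono
        ((Ball.ediam_closedBall_le _ _).trans_eq (by congr 1; ring)) hr70
    _ ≤ h (3 ^ 4 * r) := hG.mono (by gcongr; norm_num)
    _ ≤ C ^ 4 * h r := hC 4 r hr hrb
    _ = (C ^ 4 : ℝ≥0) * h r := by push_cast; rfl

theorem nonempty_vitaliSystem_of_finiteStructuralDim (hG : ContinuousGauge h)
    (hdim : FiniteStructuralDim Z) : Nonempty (VitaliSystem Z h) := by
  obtain ⟨N, δ, hδ, hN⟩ := hdim (1 / 70) (by positivity)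
  refine nonempty_vitaliSystem_of_closedBall_le hG (C := N) (show 0 < min 1 (δ / 70) by positivity)
    fun x r _ hrδ => ?_
  have hr1 : r ≤ 1 := hrδ.trans (min_le_left _ _)
  have hr70 : 2 * (35 * r) ≤ δ := by
    have : r ≤ δ / 70 := hrδ.trans (min_le_right _ _)
    linarith
  have hdiam := Ball.ediam_closedBall_le x (35 * r)
  obtain ⟨U, hU, hUdiam⟩ := hN _ (hdiam.trans (by exact_mod_cast hr70))
  have hUr i : Metric.ediam (U i) ≤ r := by
    refine (hUdiam i).trans ((mul_le_mul_right hdiam _).trans_eq ?_)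
    rw [← ENNReal.coe_mul]
    congr 1
    ring
  calc hausdorffPre h 1 (Metric.closedBall x (35 * r : ℝ≥0))
      ≤ ∑ i, hausdorffPre h 1 (U i) := (measure_mono hU).trans (measure_iUnion_fintype_le _ _)
    _ ≤ ∑ _i : Fin N, h r :=
        Finset.sum_le_sum fun i _ => hausdorffPre_le_of_ediam_le hG.mono (hUr i) hr1
    _ = (N : ℝ≥0) * h r := by simp

section Ultrametric

variable [IsUltrametricDist Z]

theorem dist_center_le_of_meets {p q : Ball Z} {r : ℝ≥0} (hp : p.radius ≤ r) (hq : q.radius ≤ r)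
    (hpq : p.Meets q) : dist p.center q.center ≤ r := by
  obtain ⟨z, hzp, hzq⟩ := hpq
  rw [Ball.mem_carrier] at *
  rw [dist_comm] at hzp
  exact (dist_triangle_max p.center z q.center).trans
    (max_le (hzp.trans (by exact_mod_cast hp)) (hzq.trans (by exact_mod_cast hq)))

theorem meets_of_meets_of_radius_le {s p q : Ball Z} (hs : s.radius ≤ p.radius)
    (hsp : s.Meets p) (hsq : s.Meets q) : p.Meets q := by
  obtain ⟨b, hbs, hbq⟩ := hsq
  refine ⟨b, (dist_triangle_max b s.center p.center).trans (max_le ?_ ?_), hbq⟩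
  · exact hbs.trans (by exact_mod_cast hs)
  · exact dist_center_le_of_meets hs le_rfl hsp

/-- The domination relation used in ultrametric spaces, where meeting balls are nested and radii
can be compared through the gauge. -/
def Ball.GaugeDominated (h : ℝ≥0 → ℝ≥0∞) (p q : Ball Z) : Prop :=
  h p.radius ≤ 2 * h q.radius ∧ p.Meets q

theorem exists_gaugeDominated_separated (hmono : Monotone h) {δ : ℝ≥0} (hfin : h δ ≠ ⊤)
    {t : Set (Ball Z)} (ht : ∀ p ∈ t, p.radius ≤ δ) :
    ∃ u ⊆ t, u.Pairwise Ball.Separated ∧ ∀ p ∈ t, ∃ q ∈ u, p.GaugeDominated h q := by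
  have hpfin : ∀ p ∈ t, h p.radius ≠ ⊤ := fun p hp => ne_top_of_le_ne_top hfin (hmono (ht p hp))
  obtain ⟨u, hut, hsep, hdom⟩ := exists_separated_subfamily (B := Ball.carrier) (t := t)
    (fun _ => Subset.rfl) (fun _ _ _ => meets_of_meets_of_radius_le)
    (size := fun p => (h p.radius).toNNReal) (R := (h δ).toNNReal)
    fun p hp => ENNReal.toNNReal_mono hfin (hmono (ht p hp))
  refine ⟨u, hut, hsep, fun p hp => ?_⟩
  obtain ⟨q, hq, hle, hpq⟩ := hdom p hp
  refine ⟨q, hq, ?_, hpq⟩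
  rw [← ENNReal.coe_toNNReal (hpfin p hp), ← ENNReal.coe_toNNReal (hpfin q (hut hq))]
  exact_mod_cast hle

-- All balls in the chain defining the enlargement have gauge at most `4 h q`, so it lies in the
-- largest ball around `q` with that property, whose diameter is at most its radius.
theorem hausdorffPre_doubleEnlargement_gaugeDominated_le (hG : ContinuousGauge h) {δ : ℝ≥0}
    (hδ : δ ≤ 1) {q : Ball Z} (hq : q.radius ≤ δ) :
    hausdorffPre h 1 (doubleEnlargement δ (Ball.GaugeDominated h) q) ≤ 4 * h q.radius := by
  have hcpt : IsCompact (Icc 0 δ ∩ h ⁻¹' Iic (4 * h q.radius)) :=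
    isCompact_Icc.inter_right (isClosed_Iic.preimage hG.continuous)
  have hq4 : h q.radius ≤ 4 * h q.radius := le_mul_of_one_le_left' (by norm_num)
  obtain ⟨r, ⟨⟨-, hrδ⟩, hr⟩, hmax⟩ := hcpt.exists_isGreatest ⟨q.radius, ⟨bot_le, hq⟩, hq4⟩
  have le_r {s : Ball Z} (hs : s.radius ≤ δ) (hs4 : h s.radius ≤ 4 * h q.radius) : s.radius ≤ r :=
    hmax ⟨⟨bot_le, hs⟩, hs4⟩
  have hsub : doubleEnlargement δ (Ball.GaugeDominated h) q ⊆ Metric.closedBall q.center r := by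
    rintro z ⟨p, p', s, hp, hp', hs, hz, ⟨hpp', hmeet⟩, ⟨hp's, hmeet'⟩, hsq, hmeet''⟩
    have hp'q : h p'.radius ≤ 2 * h q.radius := (hG.mono hp's).trans hsq
    have two_le : 2 * h q.radius ≤ 4 * h q.radius := by gcongr; norm_num
    have hpr : p.radius ≤ r := le_r hp <| hpp'.trans <| by
      calc 2 * h p'.radius ≤ 2 * (2 * h q.radius) := by gcongr
        _ = 4 * h q.radius := by rw [← mul_assoc]; norm_num
    have hp'r : p'.radius ≤ r := le_r hp' (hp'q.trans two_le)
    have hsr : s.radius ≤ r := le_r hs (hsq.trans two_le)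
    have hqr : q.radius ≤ r := le_r hq hq4
    calc dist z q.center
        ≤ max (dist z p.center) (max (dist p.center p'.center)
            (max (dist p'.center s.center) (dist s.center q.center))) :=
          (dist_triangle_max _ _ _).trans <| max_le_max le_rfl <|
            (dist_triangle_max _ _ _).trans <| max_le_max le_rfl (dist_triangle_max _ _ _)
      _ ≤ r := max_le (hz.trans (by exact_mod_cast hpr)) <|
          max_le (dist_center_le_of_meets hpr hp'r hmeet) <|
          max_le (dist_center_le_of_meets hp'r hsr hmeet') (dist_center_le_of_meets hsr hqr hmeet'')
  have hdiam : Metric.ediam (Metric.closedBall q.center (r : ℝ)) ≤ r := by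
    refine Metric.ediam_le fun a ha b hb => ?_
    rw [edist_le_coe, ← NNReal.coe_le_coe, coe_nndist]
    exact (dist_triangle_max a q.center b).trans (max_le ha (Metric.mem_closedBall'.1 hb))
  exact (hausdorffPre_le_of_ediam_le hG.mono ((Metric.ediam_mono hsub).trans hdiam)
    (hrδ.trans hδ)).trans hr

theorem nonempty_vitaliSystem_of_isUltrametricDist (hG : ContinuousGauge h) :
    Nonempty (VitaliSystem Z h) := by
  obtain ⟨δ, hδ, hδ1, hfin⟩ := hG.exists_pos_le_map_lt ENNReal.zero_lt_top one_pos
  exact ⟨{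
    const := 4
    scale := δ
    Dom := Ball.GaugeDominated h
    one_le_const := by norm_num
    scale_pos := hδ
    map_scale_ne_top := hfin.ne
    dom_refl := fun p _ => ⟨le_mul_of_one_le_left' one_le_two, p.meets_self⟩
    exists_separated := fun _ => exists_gaugeDominated_separated hG.mono hfin.ne
    enlargement_le := fun _ hq => by
      exact_mod_cast hausdorffPre_doubleEnlargement_gaugeDominated_le hG hδ1 hq }⟩

end Ultrametric

end VitaliSystem

theorem nonempty_vitaliSystem {Z : Type*} [MetricSpace Z] {h : ℝ≥0 → ℝ≥0∞}
    (hG : ContinuousGauge h) (halt : FiniteOrder h ∨ FiniteStructuralDim Z ∨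
      ∀ x y z : Z, dist x z ≤ max (dist x y) (dist y z)) : Nonempty (VitaliSystem Z h) := by
  rcases halt with hfo | hdim | hultra
  · exact nonempty_vitaliSystem_of_finiteOrder hG hfo
  · exact nonempty_vitaliSystem_of_finiteStructuralDim hG hdim
  · have : IsUltrametricDist Z := ⟨hultra⟩
    exact nonempty_vitaliSystem_of_isUltrametricDist hG

/-! ### Frostman families -/

theorem measure_biUnion_le_of_sum_le {α ι : Type*} (M : OuterMeasure α) {I : Set ι}
    {D : ι → Set α} {w : ι → ℝ≥0∞} {C K : ℝ≥0∞} (hw : ∀ i ∈ I, 0 < w i) (hK : K ≠ ⊤)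
    (hD : ∀ i ∈ I, M (D i) ≤ C * w i)
    (hsum : ∀ J : Finset ι, (J : Set ι) ⊆ I → ∑ i ∈ J, w i ≤ K) :
    M (⋃ i ∈ I, D i) ≤ C * K := by
  have htsum : ∑' i : I, w i ≤ K := by
    rw [ENNReal.tsum_eq_iSup_sum]
    refine iSup_le fun J => ?_
    simpa using hsum (J.map (Function.Embedding.subtype _)) (by simp)
  have hI : I.Countable := by
    have hsupp : Function.support (fun i : I => w i) = univ :=
      eq_univ_of_forall fun i => (hw i i.2).ne'
    have hcount := Summable.countable_support_ennreal (ne_top_of_le_ne_top hK htsum)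
    rw [hsupp] at hcount
    exact countable_coe_iff.1 (countable_univ_iff.1 hcount)
  calc M (⋃ i ∈ I, D i) ≤ ∑' i : I, M (D i) := measure_biUnion_le M hI D
    _ ≤ ∑' i : I, C * w i := ENNReal.tsum_le_tsum fun i => hD i i.2
    _ = C * ∑' i : I, w i := ENNReal.tsum_mul_left
    _ ≤ C * K := by gcongr

section Frostman

variable {Z : Type*} [MetricSpace Z] {h : ℝ≥0 → ℝ≥0∞} {A : ℝ≥0∞} {I : Set (Ball Z)}

/-- A discrete Frostman condition: the gauges of the members of `I` that touch a ball `s` add up to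
at most a constant multiple of the gauge of `s`. -/
def Frostman (h : ℝ≥0 → ℝ≥0∞) (A : ℝ≥0∞) (I : Set (Ball Z)) : Prop :=
  ∀ (s : Ball Z) (J : Finset (Ball Z)), (J : Set (Ball Z)) ⊆ I → (∀ p ∈ J, p.Touches s) →
    ∑ p ∈ J, h p.radius ≤ A * h s.radius

/-- The members of `I` touching the ball `s` (almost) saturate the Frostman condition at `s`. -/
def Heavy (h : ℝ≥0 → ℝ≥0∞) (A : ℝ≥0∞) (I : Set (Ball Z)) (s : Ball Z) : Prop :=
  ∃ J : Finset (Ball Z), (J : Set (Ball Z)) ⊆ I ∧ (∀ p ∈ J, p.Touches s) ∧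
    A * h s.radius ≤ ∑ p ∈ J, h p.radius

theorem exists_maximal_frostman (h : ℝ≥0 → ℝ≥0∞) (A : ℝ≥0∞) (u : Set (Ball Z)) :
    ∃ I, Maximal (fun I => I ⊆ u ∧ Frostman h A I) I := by
  have hchar : Order.IsOfFiniteCharacter {I : Set (Ball Z) | I ⊆ u ∧ Frostman h A I} := by
    refine fun I => ⟨fun hI J hJI _ => ⟨hJI.trans hI.1, fun s F hF => hI.2 s F (hF.trans hJI)⟩,
      fun hI => ⟨fun p hp => ?_, fun s F hF => ?_⟩⟩
    · exact (hI {p} (singleton_subset_iff.2 hp) (finite_singleton p)).1 rfl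
    · exact (hI F hF F.finite_toSet).2 s F Subset.rfl
  obtain ⟨I, -, hI⟩ := hchar.exists_maximal (x := ∅) ⟨empty_subset _, fun s J hJ _ => by
    simp [Finset.coe_eq_empty.1 (subset_empty_iff.1 hJ)]⟩
  exact ⟨I, hI⟩

theorem Frostman.exists_touches_heavy (hmono : Monotone h) (hI : Frostman h (A + 1) I)
    {p : Ball Z} (hp : ¬ Frostman h (A + 1) (insert p I)) :
    ∃ s, p.Touches s ∧ Heavy h A I s := by
  classical
  simp only [Frostman] at hp
  push Not at hp
  obtain ⟨s, J, hJ, hJs, hlt⟩ := hp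
  have hpJ : p ∈ J := by
    by_contra hpJ
    have hJI : (J : Set (Ball Z)) ⊆ I := fun q hq =>
      (hJ hq).resolve_left fun hqp => hpJ (hqp ▸ hq)
    exact (hI s J hJI hJs).not_gt hlt
  refine ⟨s, hJs p hpJ, J.erase p, ?_, fun q hq => hJs q (Finset.mem_of_mem_erase hq), ?_⟩
  · rw [Finset.coe_erase, sdiff_subset_iff, singleton_union]
    exact hJ
  · by_contra! hle
    refine lt_irrefl _ (hlt.trans_le ?_)
    calc ∑ q ∈ J, h q.radius = ∑ q ∈ J.erase p, h q.radius + h p.radius :=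
          (Finset.sum_erase_add _ _ hpJ).symm
      _ ≤ A * h s.radius + h s.radius := add_le_add hle.le (hmono (hJs p hpJ).1)
      _ = (A + 1) * h s.radius := by ring

theorem Heavy.radius_lt (hmono : Monotone h) (hA : 1 ≤ A) {s : Ball Z} (hs : Heavy h A I s)
    {r : ℝ≥0} (hI : ∀ J : Finset (Ball Z), (J : Set (Ball Z)) ⊆ I → ∑ p ∈ J, h p.radius < h r) :
    s.radius < r := by
  obtain ⟨J, hJ, -, hle⟩ := hs
  refine hmono.reflect_lt (lt_of_le_of_lt ?_ (hI J hJ))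
  exact (le_mul_of_one_le_left' hA).trans hle

-- A small ball touches at most one member of a separated family, so the witnesses are disjoint.
theorem mul_sum_le_of_heavy {F : Finset (Ball Z)} (hF : (F : Set (Ball Z)).Pairwise Ball.Separated)
    (hheavy : ∀ s ∈ F, Heavy h A I s) {τ : ℝ≥0∞}
    (hτ : ∀ J : Finset (Ball Z), (J : Set (Ball Z)) ⊆ I → ∑ p ∈ J, h p.radius ≤ τ) :
    A * ∑ s ∈ F, h s.radius ≤ τ := by
  classical
  choose! J hJI hJ hle using hheavy
  have hdisj : (F : Set (Ball Z)).PairwiseDisjoint J := fun s hs s' hs' hss' =>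
    Finset.disjoint_left.2 fun p hp hp' =>
      hF hs hs' hss' p ((hJ s hs p hp).1.trans (le_max_left _ _)) (hJ s hs p hp).2
        (hJ s' hs' p hp').2
  calc A * ∑ s ∈ F, h s.radius = ∑ s ∈ F, A * h s.radius := Finset.mul_sum ..
    _ ≤ ∑ s ∈ F, ∑ p ∈ J s, h p.radius := Finset.sum_le_sum hle
    _ = ∑ p ∈ F.biUnion J, h p.radius := (Finset.sum_biUnion hdisj).symm
    _ ≤ τ := hτ _ (by simpa using hJI)

end Frostman

/-! ### Rich sets -/

section Rich

variable {Z : Type*} [MetricSpace Z] {h : ℝ≥0 → ℝ≥0∞}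

/-- `E` is covered by a set of `δ`-content at most a constant multiple of `τ`, up to a remainder
whose content is at most a quarter of `τ`. -/
def HasQuarterRemainder (h : ℝ≥0 → ℝ≥0∞) (C : ℝ≥0∞) (δ : ℝ≥0) (τ : ℝ≥0∞) (E : Set Z) : Prop :=
  ∃ T W : Set Z, E ⊆ T ∪ W ∧ hausdorffPre h δ T ≤ C * τ ∧ 4 * hausdorffPre h 1 W ≤ τ

/-- The balls in `t` cover every point of `E` at arbitrarily small scales. -/
def IsFineCover (t : Set (Ball Z)) (E : Set Z) : Prop :=
  ∀ x ∈ E, ∀ δ : ℝ≥0, 0 < δ → ∃ p ∈ t, p.radius < δ ∧ x ∈ p.carrier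

/-- A set is rich at scale `r` if every fine cover of it, even after removal of a set with a
σ-finite cover, contains a separated finite Frostman family whose gauges add up to at least
`h r`. -/
def Rich (h : ℝ≥0 → ℝ≥0∞) (A : ℝ≥0∞) (S : Set Z) (r : ℝ≥0) : Prop :=
  ∀ Q : Set Z, HasSigmaFiniteCover (hausdorffM h) Q → ∀ t : Set (Ball Z), IsFineCover t (S \ Q) →
    ∃ I : Finset (Ball Z), (I : Set (Ball Z)) ⊆ t ∧ (I : Set (Ball Z)).Pairwise Ball.Separated ∧
      Frostman h A (I : Set (Ball Z)) ∧ h r ≤ ∑ p ∈ I, h p.radius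

theorem HasQuarterRemainder.mono {C τ : ℝ≥0∞} {δ : ℝ≥0} {E F : Set Z} (hEF : E ⊆ F)
    (hF : HasQuarterRemainder h C δ τ F) : HasQuarterRemainder h C δ τ E :=
  let ⟨T, W, hcov, hT, hW⟩ := hF
  ⟨T, W, hEF.trans hcov, hT, hW⟩

theorem HasQuarterRemainder.empty {C τ : ℝ≥0∞} {δ : ℝ≥0} :
    HasQuarterRemainder h C δ τ (∅ : Set Z) :=
  ⟨∅, ∅, empty_subset _, by simp, by simp⟩

theorem Rich.nonempty (hpos : ∀ t, 0 < t → 0 < h t) {A : ℝ≥0∞} {S : Set Z} {r : ℝ≥0} (hr : 0 < r)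
    (hS : Rich h A S r) : S.Nonempty := by
  by_contra hne
  rw [not_nonempty_iff_eq_empty.1 hne] at hS
  obtain ⟨I, hI, -, -, hle⟩ := hS ∅ .empty ∅ (by simp [IsFineCover])
  rw [Finset.coe_eq_empty.1 (subset_empty_iff.1 hI), Finset.sum_empty] at hle
  exact hle.not_gt (hpos r hr)

namespace VitaliSystem

variable (V : VitaliSystem Z h)

/-- The Frostman constant for which sets of non-σ-finite measure are rich. -/
def frostmanConst : ℝ≥0 := 4 * V.const + 1

variable {V}

theorem hausdorffPre_enlargement_le (hG : ContinuousGauge h) {q : Ball Z} {δ δ' : ℝ≥0}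
    (hq : q.radius ≤ δ') (hδ' : δ' ≤ V.scale) (hsmall : V.const * h δ' < h δ) :
    hausdorffPre h δ (V.enlargement q) ≤ V.const * h q.radius := by
  have hle := V.enlargement_le q (hq.trans hδ')
  refine (hausdorffPre_le_of_lt_map hG.mono hG.map_zero (hle.trans_lt ?_)).trans hle
  exact lt_of_le_of_lt (by gcongr; exact hG.mono hq) hsmall

theorem hausdorffPre_biUnion_enlargement_le (hG : ContinuousGauge h) {u : Set (Ball Z)}
    {δ δ' : ℝ≥0} (hu : ∀ q ∈ u, q.radius ≤ δ') (hδ' : δ' ≤ V.scale)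
    (hsmall : V.const * h δ' < h δ) {K : ℝ≥0∞} (hK : K ≠ ⊤)
    (hsum : ∀ J : Finset (Ball Z), (J : Set (Ball Z)) ⊆ u → ∑ q ∈ J, h q.radius ≤ K) :
    hausdorffPre h δ (⋃ q ∈ u, V.enlargement q) ≤ V.const * K :=
  measure_biUnion_le_of_sum_le _ (fun q _ => hG.pos _ q.radius_pos) hK
    (fun q hq => hausdorffPre_enlargement_le hG (hu q hq) hδ' hsmall) hsum

theorem four_mul_hausdorffPre_le_of_heavy (hG : ContinuousGauge h) {I u : Set (Ball Z)}
    (hu : ∀ s ∈ u, s.radius ≤ V.scale) (husep : u.Pairwise Ball.Separated)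
    (hheavy : ∀ s ∈ u, Heavy h (4 * V.const) I s) {τ : ℝ≥0∞} (hτ : τ ≠ ⊤)
    (hI : ∀ J : Finset (Ball Z), (J : Set (Ball Z)) ⊆ I → ∑ p ∈ J, h p.radius ≤ τ) :
    4 * hausdorffPre h 1 (⋃ q ∈ u, V.enlargement q) ≤ τ := by
  have hC : (4 * V.const : ℝ≥0∞) ≠ 0 := mul_ne_zero (by norm_num) <|
    ENNReal.coe_ne_zero.2 (zero_lt_one.trans_le V.one_le_const).ne'
  have hC' : (4 * V.const : ℝ≥0∞) ≠ ⊤ := ENNReal.mul_ne_top (by norm_num) ENNReal.coe_ne_top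
  have hle : hausdorffPre h 1 (⋃ q ∈ u, V.enlargement q) ≤ V.const * (τ / (4 * V.const)) := by
    refine measure_biUnion_le_of_sum_le _ (fun q _ => hG.pos _ q.radius_pos)
      (ENNReal.div_ne_top hτ hC) (fun q hq => V.enlargement_le q (hu q hq)) fun J hJ => ?_
    rw [ENNReal.le_div_iff_mul_le (Or.inl hC) (Or.inl hC'), mul_comm]
    exact mul_sum_le_of_heavy (husep.mono hJ) (fun s hs => hheavy s (hJ hs)) hI
  calc 4 * hausdorffPre h 1 (⋃ q ∈ u, V.enlargement q)
      ≤ 4 * (V.const * (τ / (4 * V.const))) := by gcongr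
    _ = 4 * V.const * (τ / (4 * V.const)) := (mul_assoc ..).symm
    _ ≤ τ := ENNReal.mul_div_le

-- Apply the covering theorem, choose a maximal Frostman subfamily `I`, and apply the covering
-- theorem once more to the balls at which `I` is saturated; these are few since their gauges are
-- bounded by those of members of `I`.
theorem hasQuarterRemainder_biUnion (hG : ContinuousGauge h) {t : Set (Ball Z)} {δ δ' : ℝ≥0}
    {τ : ℝ≥0∞} (ht : ∀ p ∈ t, p.radius ≤ δ') (hδ' : δ' ≤ V.scale) (hτ : τ ≤ h V.scale)
    (hsmall : V.const * h δ' < h δ)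
    (hI : ∀ I : Finset (Ball Z), (I : Set (Ball Z)) ⊆ t →
      (I : Set (Ball Z)).Pairwise Ball.Separated →
      Frostman h V.frostmanConst (I : Set (Ball Z)) → ∑ p ∈ I, h p.radius < τ) :
    HasQuarterRemainder h V.const δ τ (⋃ p ∈ t, p.carrier) := by
  have hconst : (V.frostmanConst : ℝ≥0∞) = 4 * V.const + 1 := by simp [frostmanConst]
  rw [hconst] at hI
  have hτtop : τ ≠ ⊤ := ne_top_of_le_ne_top V.map_scale_ne_top hτ
  have htV p (hp : p ∈ t) : p.radius ≤ V.scale := (ht p hp).trans hδ'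
  obtain ⟨u, hut, husep, hudom⟩ := V.exists_separated t htV
  obtain ⟨I, ⟨hIu, hIF⟩, hImax⟩ := exists_maximal_frostman h (4 * V.const + 1 : ℝ≥0∞) u
  have hsum (J : Finset (Ball Z)) (hJ : (J : Set (Ball Z)) ⊆ I) : ∑ p ∈ J, h p.radius < τ :=
    hI J (hJ.trans (hIu.trans hut)) (husep.mono (hJ.trans hIu))
      fun s F hF => hIF s F (hF.trans hJ)
  obtain ⟨u', hu'sub, hu'sep, hu'dom⟩ := V.exists_separated
    {s | s.radius ≤ V.scale ∧ Heavy h (4 * V.const) I s} fun s hs => hs.1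
  refine ⟨⋃ q ∈ I, V.enlargement q, ⋃ q ∈ u', V.enlargement q, ?_, ?_, ?_⟩
  · refine iUnion₂_subset fun p hp => ?_
    obtain ⟨p', hp', hpp'⟩ := hudom p hp
    by_cases hp'I : p' ∈ I
    · exact ((carrier_subset_enlargement (htV p hp) (htV p' (hut hp')) hpp').trans
        (subset_biUnion_of_mem (u := V.enlargement) hp'I)).trans subset_union_left
    · have hnot : ¬ Frostman h (4 * V.const + 1) (insert p' I) := fun hF =>
        hp'I (hImax ⟨insert_subset hp' hIu, hF⟩ (subset_insert _ _) (mem_insert _ _))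
      obtain ⟨s, hp's, hs⟩ := hIF.exists_touches_heavy hG.mono hnot
      have hsV : s.radius ≤ V.scale := (hs.radius_lt hG.mono
        (one_le_mul_of_one_le_of_one_le (by norm_num) (by exact_mod_cast V.one_le_const))
        fun J hJ => (hsum J hJ).trans_le hτ).le
      obtain ⟨q, hq, hsq⟩ := hu'dom s ⟨hsV, hs⟩
      exact ((carrier_subset_enlargement_of_touches (htV p hp) (htV p' (hut hp')) hsV hpp' hp's
        hsq).trans (subset_biUnion_of_mem (u := V.enlargement) hq)).trans subset_union_right
  · exact hausdorffPre_biUnion_enlargement_le hG (fun q hq => ht q (hut (hIu hq))) hδ' hsmall hτtop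
      fun J hJ => (hsum J hJ).le
  · exact four_mul_hausdorffPre_le_of_heavy hG (fun s hs => (hu'sub hs).1) hu'sep
      (fun s hs => (hu'sub hs).2) hτtop fun J hJ => (hsum J hJ).le

theorem exists_hasQuarterRemainder_of_not_rich (hG : ContinuousGauge h) {S : Set Z} {r : ℝ≥0}
    (hr : r ≤ V.scale) (hS : ¬ Rich h V.frostmanConst S r) :
    ∃ Q, HasSigmaFiniteCover (hausdorffM h) Q ∧
      ∀ δ, 0 < δ → HasQuarterRemainder h V.const δ (h r) (S \ Q) := by
  simp only [Rich] at hS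
  push Not at hS
  obtain ⟨Q, hQ, t, ht, hI⟩ := hS
  refine ⟨Q, hQ, fun δ hδ => ?_⟩
  obtain ⟨δ', hδ', hδ'V, hsmall⟩ := V.exists_const_mul_lt hG (hG.pos δ hδ)
  refine (hasQuarterRemainder_biUnion (t := {p | p ∈ t ∧ p.radius ≤ δ'}) hG (fun p hp => hp.2) hδ'V
    (hG.mono hr) hsmall fun I hIt => hI I fun p hp => (hIt hp).1).mono fun x hx => ?_
  obtain ⟨p, hp, hpδ, hxp⟩ := ht x hx δ' hδ'
  exact mem_biUnion (show p ∈ {p | p ∈ t ∧ p.radius ≤ δ'} from ⟨hp, hpδ.le⟩) hxp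

end VitaliSystem

end Rich

/-! ### Bad points -/

section BadPoints

variable {Z : Type*} [MetricSpace Z] [TopologicalSpace.SeparableSpace Z] [Nonempty Z]
  {h : ℝ≥0 → ℝ≥0∞} {P : Set Z} {R δ : ℝ≥0} {C : ℝ≥0∞}

theorem hasQuarterRemainder_inter_of_forall_rational (hG : ContinuousGauge h)
    (hP : ∀ p ∈ Ball.rational Z, p.radius < R →
      HasQuarterRemainder h C δ (h p.radius) (P ∩ p.carrier))
    {X : Set Z} {τ : ℝ≥0∞} (hX : hausdorffPre h 1 X < τ) (hτ : τ ≤ h R) :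
    HasQuarterRemainder h C δ τ (P ∩ X) := by
  obtain ⟨p, hp, hXp, hsum⟩ := exists_rational_cover hG.continuous hG.map_zero hX
  have hpR n : (p n).radius < R :=
    hG.mono.reflect_lt (((ENNReal.le_tsum n).trans_lt hsum).trans_le hτ)
  choose T W hcov hT hW using fun n => hP (p n) (hp n) (hpR n)
  refine ⟨⋃ n, T n, ⋃ n, W n, ?_, ?_, ?_⟩
  · rintro x ⟨hxP, hxX⟩
    obtain ⟨n, hn⟩ := mem_iUnion.1 (hXp hxX)
    rw [← iUnion_union_distrib]
    exact mem_iUnion.2 ⟨n, hcov n ⟨hxP, Metric.ball_subset_closedBall hn⟩⟩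
  · calc hausdorffPre h δ (⋃ n, T n) ≤ ∑' n, hausdorffPre h δ (T n) := measure_iUnion_le _
      _ ≤ ∑' n, C * h (p n).radius := ENNReal.tsum_le_tsum hT
      _ = C * ∑' n, h (p n).radius := ENNReal.tsum_mul_left
      _ ≤ C * τ := by gcongr
  · calc 4 * hausdorffPre h 1 (⋃ n, W n)
        ≤ 4 * ∑' n, hausdorffPre h 1 (W n) := by gcongr; exact measure_iUnion_le _
      _ = ∑' n, 4 * hausdorffPre h 1 (W n) := ENNReal.tsum_mul_left.symm
      _ ≤ ∑' n, h (p n).radius := ENNReal.tsum_le_tsum hW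
      _ ≤ τ := hsum.le

-- Each step halves the content of the part of `P` that is not yet covered, until that content is
-- so small that it does not differ from the `δ`-content.
theorem hausdorffPre_inter_le_of_forall_rational (hG : ContinuousGauge h)
    (hP : ∀ p ∈ Ball.rational Z, p.radius < R →
      HasQuarterRemainder h C δ (h p.radius) (P ∩ p.carrier)) (n : ℕ) :
    ∀ {a : ℝ≥0∞} {X : Set Z}, 0 < a → a ≠ ⊤ → 2 * a ≤ h R → a < 2 ^ n * h δ →
      hausdorffPre h 1 X ≤ a → hausdorffPre h δ (P ∩ X) ≤ (4 * C + 1) * a := by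
  induction n with
  | zero =>
    intro a X _ _ _ haδ hX
    have hPX : hausdorffPre h 1 (P ∩ X) ≤ a := (measure_mono inter_subset_right).trans hX
    calc hausdorffPre h δ (P ∩ X) ≤ hausdorffPre h 1 (P ∩ X) :=
          hausdorffPre_le_of_lt_map hG.mono hG.map_zero (hPX.trans_lt (by simpa using haδ))
      _ ≤ (4 * C + 1) * a := hPX.trans (le_mul_of_one_le_left' le_add_self)
  | succ n ih =>
    intro a X ha hatop haR haδ hX
    have hlt : hausdorffPre h 1 X < 2 * a := by
      rw [two_mul]
      exact hX.trans_lt (ENNReal.lt_add_right hatop ha.ne')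
    obtain ⟨T, W, hcov, hT, hW⟩ := hasQuarterRemainder_inter_of_forall_rational hG hP hlt haR
    obtain ⟨b, rfl⟩ : ∃ b, a = b + b := ⟨a / 2, (ENNReal.add_halves a).symm⟩
    have hb : 0 < b := pos_of_ne_zero fun hb => by simp [hb] at ha
    have hbtop : b ≠ ⊤ := fun hb => by simp [hb] at hatop
    have hWb : hausdorffPre h 1 W ≤ b := by
      refine (ENNReal.mul_le_mul_iff_right (a := 4) (by norm_num) (by norm_num)).1 (hW.trans_eq ?_)
      ring
    have hbR : 2 * b ≤ h R := le_trans (by gcongr; exact le_self_add) haR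
    have hbδ : b < 2 ^ n * h δ := by
      rw [← two_mul, pow_succ', mul_assoc] at haδ
      exact (ENNReal.mul_lt_mul_iff_right (by norm_num) (by norm_num)).1 haδ
    calc hausdorffPre h δ (P ∩ X)
        ≤ hausdorffPre h δ (T ∪ P ∩ W) :=
          measure_mono fun x hx => (hcov hx).imp id fun hxW => ⟨hx.1, hxW⟩
      _ ≤ hausdorffPre h δ T + hausdorffPre h δ (P ∩ W) := measure_union_le _ _
      _ ≤ C * (2 * (b + b)) + (4 * C + 1) * b := add_le_add hT (ih hb hbtop hbR hbδ hWb)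
      _ ≤ C * (2 * (b + b)) + (4 * C + 1) * b + b := le_self_add
      _ = (4 * C + 1) * (b + b) := by ring

theorem hausdorffM_inter_lt_top_of_forall_rational (hG : ContinuousGauge h) (hC : C ≠ ⊤)
    (hP : ∀ δ, 0 < δ → ∀ p ∈ Ball.rational Z, p.radius < R →
      HasQuarterRemainder h C δ (h p.radius) (P ∩ p.carrier))
    {a : ℝ≥0∞} (ha : 0 < a) (ha_top : a ≠ ⊤) (haR : 2 * a ≤ h R) {X : Set Z}
    (hX : hausdorffPre h 1 X ≤ a) : hausdorffM h (P ∩ X) < ⊤ := by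
  have hle : hausdorffM h (P ∩ X) ≤ (4 * C + 1) * a := by
    refine hausdorffM_le fun δ hδ => ?_
    obtain ⟨n, hn⟩ := ENNReal.exists_nat_mul_gt (hG.pos δ hδ).ne' ha_top
    refine hausdorffPre_inter_le_of_forall_rational hG (hP δ hδ) n ha ha_top haR
      (hn.trans_le ?_) hX
    gcongr
    exact_mod_cast (Nat.lt_two_pow_self (n := n)).le
  exact hle.trans_lt (ENNReal.mul_lt_top (by finiteness) ha_top.lt_top)

theorem hasSigmaFiniteCover_of_forall_rational (hG : ContinuousGauge h) (V : VitaliSystem Z h)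
    (hR : 0 < R) (hRV : R ≤ V.scale)
    (hP : ∀ δ, 0 < δ → ∀ p ∈ Ball.rational Z, p.radius < R →
      HasQuarterRemainder h V.const δ (h p.radius) (P ∩ p.carrier)) :
    HasSigmaFiniteCover (hausdorffM h) P := by
  have haR : 2 * (h R / 2) ≤ h R := ENNReal.mul_div_le
  have ha : 0 < h R / 2 := ENNReal.half_pos (hG.pos R hR).ne'
  have ha_top : h R / 2 ≠ ⊤ :=
    ENNReal.div_ne_top (ne_top_of_le_ne_top V.map_scale_ne_top (hG.mono hRV)) two_ne_zero
  obtain ⟨r, hr, hrV, hsmall⟩ := V.exists_const_mul_lt hG ha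
  have hcov : P ⊆ ⋃ p ∈ {p | p ∈ Ball.rational Z ∧ p.radius < r}, P ∩ p.carrier := fun x hx => by
    obtain ⟨p, hp, hpr, hxp⟩ := Ball.exists_rational_mem x hr
    exact mem_biUnion (show p ∈ {p | p ∈ Ball.rational Z ∧ p.radius < r} from ⟨hp, hpr⟩) ⟨hx, hxp⟩
  refine .mono hcov (.biUnion (Ball.countable_rational.mono fun p hp => hp.1) fun p hp => ?_)
  have hpV : p.radius ≤ V.scale := hp.2.le.trans hrV
  have hpa : hausdorffPre h 1 p.carrier ≤ h R / 2 :=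
    calc hausdorffPre h 1 p.carrier ≤ V.const * h p.radius :=
          (measure_mono (VitaliSystem.carrier_subset_enlargement hpV hpV (V.dom_refl p hpV))).trans
            (V.enlargement_le p hpV)
      _ ≤ V.const * h r := by gcongr; exact hG.mono hp.2.le
      _ ≤ h R / 2 := hsmall.le
  exact .of_lt_top
    (hausdorffM_inter_lt_top_of_forall_rational hG ENNReal.coe_ne_top hP ha ha_top haR hpa)

/-- The points of `S` around which no sufficiently small rational ball has a rich intersection
with `S`. -/
def badPoints (h : ℝ≥0 → ℝ≥0∞) (A : ℝ≥0∞) (S : Set Z) : Set Z :=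
  {x | x ∈ S ∧ ∃ δ : ℝ≥0, 0 < δ ∧ ∀ p ∈ Ball.rational Z, p.radius < δ → x ∈ p.carrier →
    ¬ Rich h A (S ∩ p.carrier) p.radius}

theorem hasSigmaFiniteCover_badPoints (hG : ContinuousGauge h) (V : VitaliSystem Z h) (S : Set Z) :
    HasSigmaFiniteCover (hausdorffM h) (badPoints h V.frostmanConst S) := by
  set bad : Set (Ball Z) := {p | p ∈ Ball.rational Z ∧ p.radius ≤ V.scale ∧
    ¬ Rich h V.frostmanConst (S ∩ p.carrier) p.radius}
  choose! Q hQ hrem using fun p (hp : p ∈ bad) =>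
    VitaliSystem.exists_hasQuarterRemainder_of_not_rich hG hp.2.1 hp.2.2
  have hQs : HasSigmaFiniteCover (hausdorffM h) (⋃ p ∈ bad, Q p) :=
    .biUnion (Ball.countable_rational.mono fun p hp => hp.1) hQ
  set P : ℕ → Set Z := fun j => {x | x ∈ S ∧ (x ∉ ⋃ p ∈ bad, Q p) ∧
    ∀ p ∈ Ball.rational Z, p.radius < 1 / ((j : ℝ≥0) + 1) → x ∈ p.carrier →
      ¬ Rich h V.frostmanConst (S ∩ p.carrier) p.radius}
  have hcov : badPoints h V.frostmanConst S ⊆ (⋃ p ∈ bad, Q p) ∪ ⋃ j, P j := by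
    rintro x ⟨hxS, δ, hδ, hx⟩
    obtain ⟨j, hj⟩ := exists_nat_one_div_lt hδ
    by_cases hxQ : x ∈ ⋃ p ∈ bad, Q p
    · exact Or.inl hxQ
    · exact Or.inr (mem_iUnion.2 ⟨j, hxS, hxQ, fun p hp hpj => hx p hp (hpj.trans hj)⟩)
  refine .mono hcov (hQs.union (.iUnion_nat fun j => ?_))
  refine hasSigmaFiniteCover_of_forall_rational hG V (R := min (1 / ((j : ℝ≥0) + 1)) V.scale)
    (lt_min (by positivity) V.scale_pos) (min_le_right _ _) fun δ hδ p hp hpR => ?_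
  rcases (P j ∩ p.carrier).eq_empty_or_nonempty with hempty | ⟨x, hxP, hxp⟩
  · rw [hempty]
    exact .empty
  · have hpbad : p ∈ bad := ⟨hp, (hpR.trans_le (min_le_right _ _)).le,
      hxP.2.2 p hp (hpR.trans_le (min_le_left _ _)) hxp⟩
    have hsub : P j ∩ p.carrier ⊆ (S ∩ p.carrier) \ Q p := fun y hy =>
      ⟨⟨hy.1.1, hy.2⟩, fun hyQ => hy.1.2.1 (mem_biUnion hpbad hyQ)⟩
    exact (hrem p hpbad δ hδ).mono hsub

end BadPoints

/-! ### Upper density of finite measures -/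

section Density

variable {Z : Type*} [MetricSpace Z] [MeasurableSpace Z] [BorelSpace Z] {h : ℝ≥0 → ℝ≥0∞}

theorem sum_measure_carrier_le (m : Measure Z) {J : Finset (Ball Z)}
    (hJ : (J : Set (Ball Z)).Pairwise Ball.Separated) : ∑ q ∈ J, m q.carrier ≤ m univ := by
  have hdisj : (J : Set (Ball Z)).PairwiseDisjoint Ball.carrier := fun p hp q hq hpq =>
    not_not.1 fun hne => hJ hp hq hpq p (le_max_left _ _) p.meets_self
      (not_disjoint_iff_nonempty_inter.1 hne)
  rw [← measure_biUnion_finset hdisj fun q _ => q.isClosed_carrier.measurableSet]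
  exact measure_mono (subset_univ _)

theorem VitaliSystem.hausdorffM_le_of_isFineCover (hG : ContinuousGauge h) (V : VitaliSystem Z h)
    (m : Measure Z) [IsFiniteMeasure m] {ε : ℝ≥0∞} (hε : ε ≠ 0) (hε_top : ε ≠ ⊤) {E : Set Z}
    (hE : IsFineCover {p : Ball Z | ε * h p.radius < m p.carrier} E) :
    hausdorffM h E ≤ V.const * (m univ / ε) := by
  refine hausdorffM_le fun δ hδ => ?_
  obtain ⟨δ', hδ', hδ'V, hsmall⟩ := V.exists_const_mul_lt hG (hG.pos δ hδ)
  obtain ⟨u, hut, husep, hudom⟩ := V.exists_separated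
    {p | p.radius ≤ δ' ∧ ε * h p.radius < m p.carrier} fun p hp => hp.1.trans hδ'V
  have hsub : E ⊆ ⋃ q ∈ u, V.enlargement q := fun x hx => by
    obtain ⟨p, hpm, hpδ, hxp⟩ := hE x hx δ' hδ'
    obtain ⟨q, hq, hpq⟩ := hudom p ⟨hpδ.le, hpm⟩
    exact mem_biUnion hq (VitaliSystem.carrier_subset_enlargement (hpδ.le.trans hδ'V)
      ((hut hq).1.trans hδ'V) hpq hxp)
  refine (measure_mono hsub).trans (VitaliSystem.hausdorffPre_biUnion_enlargement_le hG
    (fun q hq => (hut hq).1) hδ'V hsmall (ENNReal.div_ne_top (measure_ne_top m _) hε)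
    fun J hJ => ?_)
  rw [ENNReal.le_div_iff_mul_le (Or.inl hε) (Or.inl hε_top), mul_comm, Finset.mul_sum]
  exact (Finset.sum_le_sum fun q hq => (hut (hJ hq)).2.le).trans
    (sum_measure_carrier_le m (husep.mono hJ))

theorem VitaliSystem.exists_hasSigmaFiniteCover_measure_carrier_le (hG : ContinuousGauge h)
    (V : VitaliSystem Z h) (m : Measure Z) [IsFiniteMeasure m] :
    ∃ E : Set Z, HasSigmaFiniteCover (hausdorffM h) E ∧ ∀ x ∉ E, ∀ ε : ℝ≥0∞, ε ≠ 0 →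
      ∃ δ : ℝ≥0, 0 < δ ∧ ∀ p : Ball Z, p.radius < δ → x ∈ p.carrier →
        m p.carrier ≤ ε * h p.radius := by
  set dense : ℕ → Set Z := fun n => {x | ∀ δ : ℝ≥0, 0 < δ →
    ∃ p : Ball Z, (n + 1 : ℝ≥0∞)⁻¹ * h p.radius < m p.carrier ∧ p.radius < δ ∧ x ∈ p.carrier}
  refine ⟨⋃ n, dense n, .iUnion_nat fun n => .of_lt_top ?_, fun x hx ε hε => ?_⟩
  · refine (V.hausdorffM_le_of_isFineCover hG m (ε := (n + 1 : ℝ≥0∞)⁻¹) (by simp) (by simp)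
      fun x hx => hx).trans_lt (ENNReal.mul_lt_top ENNReal.coe_lt_top ?_)
    exact ENNReal.div_lt_top (measure_ne_top m _) (by simp)
  · obtain ⟨n, hn⟩ := ENNReal.exists_inv_nat_lt hε
    have hxn : x ∉ dense n := fun hxn => hx (mem_iUnion.2 ⟨n, hxn⟩)
    simp only [dense, mem_ofPred_eq] at hxn
    push Not at hxn
    obtain ⟨δ, hδ, hx⟩ := hxn
    refine ⟨δ, hδ, fun p hpδ hxp => (not_lt.1 fun hlt => hx p hlt hpδ hxp).trans ?_⟩
    gcongr
    exact (ENNReal.inv_le_inv.2 le_self_add).trans hn.le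

end Density

/-! ### The tree of rich pieces -/

section Tree

variable {Z : Type*} [MetricSpace Z] [MeasurableSpace Z] {h : ℝ≥0 → ℝ≥0∞} {A ρ : ℝ≥0}
  {g : (ℕ → ℕ) → Z} {m : Measure Z}

/-- A node of the tree: a piece of Baire space whose image under `g` is rich and lies in a ball,
of radius at most `ρ`, that is small and of low `m`-density relative to the level of the node. -/
structure Node (h : ℝ≥0 → ℝ≥0∞) (A ρ : ℝ≥0) (g : (ℕ → ℕ) → Z) (m : Measure Z) where
  level : ℕ
  piece : Set (ℕ → ℕ)
  ball : Ball Z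
  radius_le_inv : ball.radius ≤ 1 / ((level : ℝ≥0) + 1)
  radius_le : ball.radius ≤ ρ
  rich : Rich h A (g '' piece) ball.radius
  mapsTo : MapsTo g piece ball.carrier
  measure_le : m ball.carrier ≤ ((2 * A) ^ level)⁻¹ * h ball.radius

/-- The image of the piece of the node `n` meets the ball `b`. -/
def Node.Reaches (n : Node h A ρ g m) (b : Ball Z) : Prop :=
  (g '' n.piece ∩ b.carrier).Nonempty

/-- A finite family of nodes subdividing the node `n`. It is separated and Frostman, and it fixes
the coordinate of Baire space given by the level of `n`. -/
structure Refinement (n : Node h A ρ g m) where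
  children : Finset (Node h A ρ g m)
  level_eq : ∀ c ∈ children, c.level = n.level + 1
  piece_subset : ∀ c ∈ children, c.piece ⊆ n.piece
  radius_le : ∀ c ∈ children, c.ball.radius ≤ n.ball.radius
  exists_value : ∀ c ∈ children, ∃ v, ∀ σ ∈ c.piece, σ n.level = v
  separated : (children : Set (Node h A ρ g m)).Pairwise
    fun c d => Ball.Separated c.ball d.ball
  sum_touching_le : ∀ (s : Ball Z) (J : Finset (Node h A ρ g m)), J ⊆ children →
    (∀ c ∈ J, c.ball.Touches s) → ∑ c ∈ J, h c.ball.radius ≤ A * h s.radius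
  le_sum : h n.ball.radius ≤ ∑ c ∈ children, h c.ball.radius

theorem Node.Reaches.mono {n c : Node h A ρ g m} (hcn : c.piece ⊆ n.piece) {b : Ball Z}
    (hc : c.Reaches b) : n.Reaches b :=
  Set.Nonempty.mono (inter_subset_inter_left _ (image_mono hcn)) hc

theorem Node.Reaches.meets {n : Node h A ρ g m} {b : Ball Z} (hn : n.Reaches b) :
    b.Meets n.ball :=
  let ⟨x, hx, hxb⟩ := hn
  ⟨x, hxb, n.mapsTo.image_subset hx⟩

theorem Node.piece_nonempty (hpos : ∀ t, 0 < t → 0 < h t) (n : Node h A ρ g m) :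
    n.piece.Nonempty :=
  (n.rich.nonempty hpos n.ball.radius_pos).of_image

namespace Refinement

variable {n : Node h A ρ g m}

theorem sum_le (hpos : ∀ t, 0 < t → 0 < h t) (T : Refinement n) :
    ∑ c ∈ T.children, h c.ball.radius ≤ A * h n.ball.radius := by
  refine T.sum_touching_le n.ball _ subset_rfl fun c hc => ⟨T.radius_le c hc, ?_⟩
  obtain ⟨σ, hσ⟩ := c.piece_nonempty hpos
  exact ⟨g σ, c.mapsTo hσ, n.mapsTo (T.piece_subset c hc hσ)⟩

/-- Two different nodes of the family reach the ball `b`. -/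
def Shared (T : Refinement n) (b : Ball Z) : Prop :=
  ∃ c ∈ T.children, ∃ d ∈ T.children, c ≠ d ∧ c.Reaches b ∧ d.Reaches b

theorem Shared.touches {T : Refinement n} {b : Ball Z} (hb : T.Shared b) {c : Node h A ρ g m}
    (hc : c ∈ T.children) (hcb : c.Reaches b) : c.ball.Touches b := by
  obtain ⟨d, hd, hcd, hdb⟩ : ∃ d ∈ T.children, c ≠ d ∧ d.Reaches b := by
    obtain ⟨d, hd, d', hd', hne, hdb, hdb'⟩ := hb
    by_cases hcd : c = d
    · exact ⟨d', hd', hcd ▸ hne, hdb'⟩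
    · exact ⟨d, hd, hcd, hdb⟩
  refine ⟨?_, hcb.meets.symm⟩
  by_contra! hlt
  exact T.separated hc hd hcd b (hlt.le.trans (le_max_left _ _)) hcb.meets hdb.meets

theorem sum_reaching_shared_le (T : Refinement n) {J : Finset (Node h A ρ g m)}
    (hJ : J ⊆ T.children) {F : Finset (Ball Z)} (hF : ∀ b ∈ F, T.Shared b)
    (hJF : ∀ c ∈ J, ∃ b ∈ F, c.Reaches b) :
    ∑ c ∈ J, h c.ball.radius ≤ A * ∑ b ∈ F, h b.radius := by
  classical
  have : Nonempty (Ball Z) := ⟨n.ball⟩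
  choose! β hβF hβ using hJF
  calc ∑ c ∈ J, h c.ball.radius
      = ∑ b ∈ F, ∑ c ∈ J with β c = b, h c.ball.radius :=
        (Finset.sum_fiberwise_of_maps_to hβF _).symm
    _ ≤ ∑ b ∈ F, A * h b.radius := Finset.sum_le_sum fun b hb => by
        refine T.sum_touching_le b _ ((Finset.filter_subset _ _).trans hJ) fun c hc => ?_
        obtain ⟨hcJ, rfl⟩ := Finset.mem_filter.1 hc
        exact (hF _ hb).touches (hJ hcJ) (hβ c hcJ)
    _ = A * ∑ b ∈ F, h b.radius := (Finset.mul_sum _ _ _).symm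

open Classical in
theorem sum_sum_reached_le (T : Refinement n) {J : Finset (Node h A ρ g m)}
    (hJ : J ⊆ T.children) {F : Finset (Ball Z)}
    (hJF : ∀ c ∈ J, ∀ b ∈ F, c.Reaches b → ¬ T.Shared b) :
    ∑ c ∈ J, ∑ b ∈ F with c.Reaches b, h b.radius ≤
      ∑ b ∈ F with ¬ T.Shared b, h b.radius := by
  rw [← Finset.sum_biUnion]
  · refine Finset.sum_le_sum_of_subset fun b hb => ?_
    obtain ⟨c, hc, hbc⟩ := Finset.mem_biUnion.1 hb
    rw [Finset.mem_filter] at hbc ⊢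
    exact ⟨hbc.1, hJF c hc b hbc.1 hbc.2⟩
  · refine fun c hc d hd hcd => Finset.disjoint_left.2 fun b hbc hbd => ?_
    rw [Finset.mem_filter] at hbc hbd
    exact hJF c hc b hbc.1 hbc.2 ⟨c, hJ hc, d, hJ hd, hcd, hbc.2, hbd.2⟩

open Classical in
-- Children reaching a shared ball are controlled by the Frostman condition; the remaining ones
-- reach pairwise disjoint sets of balls, so their individual bounds can be added.
theorem le_mul_sum (T : Refinement n) {F : Finset (Ball Z)}
    (hF : ∀ c ∈ T.children, h c.ball.radius ≤ A * ∑ b ∈ F with c.Reaches b, h b.radius) :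
    h n.ball.radius ≤ A * ∑ b ∈ F, h b.radius := by
  set J : Finset (Node h A ρ g m) := {c ∈ T.children | ∃ b ∈ F, T.Shared b ∧ c.Reaches b}
  set J' : Finset (Node h A ρ g m) := {c ∈ T.children | ¬ ∃ b ∈ F, T.Shared b ∧ c.Reaches b}
  have hJ : ∑ c ∈ J, h c.ball.radius ≤ A * ∑ b ∈ F with T.Shared b, h b.radius := by
    refine T.sum_reaching_shared_le (Finset.filter_subset _ _)
      (fun b hb => (Finset.mem_filter.1 hb).2) fun c hc => ?_
    obtain ⟨-, b, hbF, hbT, hcb⟩ := Finset.mem_filter.1 hc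
    exact ⟨b, Finset.mem_filter.2 ⟨hbF, hbT⟩, hcb⟩
  have hJ' : ∑ c ∈ J', h c.ball.radius ≤ A * ∑ b ∈ F with ¬ T.Shared b, h b.radius :=
    calc ∑ c ∈ J', h c.ball.radius
        ≤ ∑ c ∈ J', A * ∑ b ∈ F with c.Reaches b, h b.radius :=
          Finset.sum_le_sum fun c hc => hF c (Finset.mem_filter.1 hc).1
      _ = A * ∑ c ∈ J', ∑ b ∈ F with c.Reaches b, h b.radius := (Finset.mul_sum _ _ _).symm
      _ ≤ A * ∑ b ∈ F with ¬ T.Shared b, h b.radius := by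
          gcongr
          exact T.sum_sum_reached_le (Finset.filter_subset _ _) fun c hc b hb hcb hbT =>
            (Finset.mem_filter.1 hc).2 ⟨b, hb, hbT, hcb⟩
  calc h n.ball.radius ≤ ∑ c ∈ T.children, h c.ball.radius := T.le_sum
    _ = ∑ c ∈ J, h c.ball.radius + ∑ c ∈ J', h c.ball.radius :=
        (Finset.sum_filter_add_sum_filter_not _ _ _).symm
    _ ≤ A * ∑ b ∈ F with T.Shared b, h b.radius + A * ∑ b ∈ F with ¬ T.Shared b, h b.radius :=
        add_le_add hJ hJ'
    _ = A * ∑ b ∈ F, h b.radius := by rw [← mul_add, Finset.sum_filter_add_sum_filter_not]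

end Refinement

open Classical in
/-- The nodes obtained from `n` by refining `j` times according to `T`. -/
noncomputable def descendants (T : ∀ n : Node h A ρ g m, Refinement n) :
    ℕ → Node h A ρ g m → Finset (Node h A ρ g m)
  | 0, n => {n}
  | j + 1, n => (T n).children.biUnion (descendants T j)

variable {T : ∀ n : Node h A ρ g m, Refinement n}

theorem mem_descendants_zero {n d : Node h A ρ g m} : d ∈ descendants T 0 n ↔ d = n := by
  simp only [descendants, Finset.mem_singleton]

theorem mem_descendants_succ {j : ℕ} {n d : Node h A ρ g m} :
    d ∈ descendants T (j + 1) n ↔ ∃ c ∈ (T n).children, d ∈ descendants T j c := by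
  simp only [descendants, Finset.mem_biUnion]

theorem level_of_mem_descendants {j : ℕ} {n d : Node h A ρ g m} (hd : d ∈ descendants T j n) :
    d.level = n.level + j := by
  induction j generalizing n with
  | zero => rw [mem_descendants_zero.1 hd, add_zero]
  | succ j ih =>
    obtain ⟨c, hc, hdc⟩ := mem_descendants_succ.1 hd
    rw [ih hdc, (T n).level_eq c hc]
    ring

theorem piece_subset_of_mem_descendants {j : ℕ} {n d : Node h A ρ g m}
    (hd : d ∈ descendants T j n) : d.piece ⊆ n.piece := by
  induction j generalizing n with
  | zero => rw [mem_descendants_zero.1 hd]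
  | succ j ih =>
    obtain ⟨c, hc, hdc⟩ := mem_descendants_succ.1 hd
    exact (ih hdc).trans ((T n).piece_subset c hc)

theorem exists_parent_of_mem_descendants {j : ℕ} {n d : Node h A ρ g m}
    (hd : d ∈ descendants T (j + 1) n) : ∃ e ∈ descendants T j n, d ∈ (T e).children := by
  induction j generalizing n with
  | zero =>
    obtain ⟨c, hc, hdc⟩ := mem_descendants_succ.1 hd
    exact ⟨n, mem_descendants_zero.2 rfl, mem_descendants_zero.1 hdc ▸ hc⟩
  | succ j ih =>
    obtain ⟨c, hc, hdc⟩ := mem_descendants_succ.1 hd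
    obtain ⟨e, he, hde⟩ := ih hdc
    exact ⟨e, mem_descendants_succ.2 ⟨c, hc, he⟩, hde⟩

theorem measure_biUnion_descendants_le (hpos : ∀ t, 0 < t → 0 < h t) (j : ℕ)
    (n : Node h A ρ g m) :
    m (⋃ d ∈ descendants T j n, d.ball.carrier) ≤
      ((2 * A) ^ (n.level + j))⁻¹ * (A ^ j * h n.ball.radius) := by
  classical
  induction j generalizing n with
  | zero => simpa [descendants] using n.measure_le
  | succ j ih =>
    calc m (⋃ d ∈ descendants T (j + 1) n, d.ball.carrier)
        = m (⋃ c ∈ (T n).children, ⋃ d ∈ descendants T j c, d.ball.carrier) := by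
          rw [descendants, Finset.set_biUnion_biUnion]
      _ ≤ ∑ c ∈ (T n).children, m (⋃ d ∈ descendants T j c, d.ball.carrier) :=
          measure_biUnion_finset_le _ _
      _ ≤ ∑ c ∈ (T n).children, ((2 * A) ^ (n.level + (j + 1)))⁻¹ * (A ^ j * h c.ball.radius) :=
          Finset.sum_le_sum fun c hc => (ih c).trans_eq <| by
            rw [(T n).level_eq c hc, add_right_comm, add_assoc]
      _ = ((2 * A) ^ (n.level + (j + 1)))⁻¹ * (A ^ j * ∑ c ∈ (T n).children, h c.ball.radius) := by
          rw [Finset.mul_sum, Finset.mul_sum]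
      _ ≤ ((2 * A) ^ (n.level + (j + 1)))⁻¹ * (A ^ j * (A * h n.ball.radius)) := by
          gcongr
          exact (T n).sum_le hpos
      _ = ((2 * A) ^ (n.level + (j + 1)))⁻¹ * (A ^ (j + 1) * h n.ball.radius) := by
          rw [pow_succ (A : ℝ≥0∞) j, mul_assoc ((A : ℝ≥0∞) ^ j)]

theorem le_mul_sum_of_forall_descendants (hmono : Monotone h) (hA : 1 ≤ A) (j : ℕ)
    (n : Node h A ρ g m) {F : Finset (Ball Z)}
    (hreach : ∀ d ∈ descendants T j n, ∃ b ∈ F, d.Reaches b)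
    (hradius : ∀ d ∈ descendants T j n, ∀ b ∈ F, d.ball.radius ≤ b.radius) :
    h n.ball.radius ≤ A * ∑ b ∈ F, h b.radius := by
  classical
  induction j generalizing n F with
  | zero =>
    have hn : n ∈ descendants T 0 n := mem_descendants_zero.2 rfl
    obtain ⟨b, hb, -⟩ := hreach n hn
    calc h n.ball.radius ≤ h b.radius := hmono (hradius n hn b hb)
      _ ≤ ∑ b ∈ F, h b.radius :=
        Finset.single_le_sum_of_canonicallyOrdered (f := fun b : Ball Z => h b.radius) hb
      _ ≤ A * ∑ b ∈ F, h b.radius := le_mul_of_one_le_left' (by exact_mod_cast hA)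
  | succ j ih =>
    refine (T n).le_mul_sum fun c hc => ih c (fun d hd => ?_) fun d hd b hb =>
      hradius d (mem_descendants_succ.2 ⟨c, hc, hd⟩) b (Finset.mem_filter.1 hb).1
    obtain ⟨b, hb, hdb⟩ := hreach d (mem_descendants_succ.2 ⟨c, hc, hd⟩)
    have hcb : c.Reaches b := hdb.mono (piece_subset_of_mem_descendants hd)
    exact ⟨b, Finset.mem_filter.2 ⟨hb, hcb⟩, hdb⟩

end Tree

section Existence

variable {Z : Type*} [MetricSpace Z] [TopologicalSpace.SeparableSpace Z] [Nonempty Z]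
  [MeasurableSpace Z] [BorelSpace Z] {h : ℝ≥0 → ℝ≥0∞} {g : (ℕ → ℕ) → Z}
  {m : Measure Z} [IsFiniteMeasure m]

theorem exists_node_subset (hG : ContinuousGauge h) (V : VitaliSystem Z h) (k : ℕ)
    (P : Set (ℕ → ℕ)) :
    ∃ Q, HasSigmaFiniteCover (hausdorffM h) Q ∧ ∀ x ∈ g '' P \ Q, ∀ δ, 0 < δ →
      ∃ n : Node h V.frostmanConst V.scale g m, n.level = k ∧ n.piece ⊆ P ∧
        n.ball.radius < δ ∧ x ∈ n.ball.carrier := by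
  obtain ⟨E, hE, hdensity⟩ := V.exists_hasSigmaFiniteCover_measure_carrier_le hG m
  refine ⟨_, (hasSigmaFiniteCover_badPoints hG V (g '' P)).union hE, ?_⟩
  rintro x ⟨hxP, hxQ⟩ δ hδ
  have hε : ((2 * V.frostmanConst) ^ k)⁻¹ ≠ 0 := by
    simp [VitaliSystem.frostmanConst]
  obtain ⟨δ', hδ', hm⟩ := hdensity x (fun hx => hxQ (Or.inr hx)) _ (ENNReal.coe_ne_zero.2 hε)
  have hgood : ∃ p ∈ Ball.rational Z,
      p.radius < min (min δ δ') (min (1 / ((k : ℝ≥0) + 1)) V.scale) ∧ x ∈ p.carrier ∧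
      Rich h V.frostmanConst (g '' P ∩ p.carrier) p.radius := by
    by_contra! hbad
    exact hxQ (Or.inl ⟨hxP, _,
      lt_min (lt_min hδ hδ') (lt_min (by positivity) V.scale_pos), hbad⟩)
  obtain ⟨p, -, hpr, hxp, hrich⟩ := hgood
  simp only [lt_min_iff] at hpr
  obtain ⟨⟨hpδ, hpδ'⟩, hpk, hpV⟩ := hpr
  exact ⟨⟨k, P ∩ g ⁻¹' p.carrier, p, hpk.le, hpV.le, by rwa [image_inter_preimage],
    fun σ hσ => hσ.2, hm p hpδ' hxp⟩, rfl, inter_subset_left, hpδ, hxp⟩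

theorem exists_node_level_zero (hG : ContinuousGauge h) (V : VitaliSystem Z h)
    (hg : ¬ HasSigmaFiniteCover (hausdorffM h) (range g)) :
    ∃ n : Node h V.frostmanConst V.scale g m, n.level = 0 := by
  obtain ⟨Q, hQ, hnode⟩ := exists_node_subset (g := g) (m := m) hG V 0 univ
  rw [image_univ] at hnode
  obtain ⟨x, hx, hxQ⟩ := not_subset.1 fun hsub => hg (.mono hsub hQ)
  obtain ⟨n, hn, -⟩ := hnode x ⟨hx, hxQ⟩ 1 one_pos
  exact ⟨n, hn⟩

theorem nonempty_refinement (hG : ContinuousGauge h) (V : VitaliSystem Z h)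
    (n : Node h V.frostmanConst V.scale g m) : Nonempty (Refinement n) := by
  classical
  choose Q hQ hnode using fun v =>
    exists_node_subset (g := g) (m := m) hG V (n.level + 1) (n.piece ∩ {σ | σ n.level = v})
  set N : Set (Node h V.frostmanConst V.scale g m) := {c | c.level = n.level + 1 ∧
    c.piece ⊆ n.piece ∧ c.ball.radius ≤ n.ball.radius ∧ ∃ v, ∀ σ ∈ c.piece, σ n.level = v}
  have hfine : IsFineCover (Node.ball '' N) (g '' n.piece \ ⋃ v, Q v) := by
    rintro x ⟨⟨σ, hσ, rfl⟩, hxQ⟩ δ hδ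
    obtain ⟨c, hcl, hcP, hcr, hxc⟩ := hnode (σ n.level) (g σ)
      ⟨⟨σ, ⟨hσ, rfl⟩, rfl⟩, fun hx => hxQ (mem_iUnion.2 ⟨_, hx⟩)⟩ (min δ n.ball.radius)
      (lt_min hδ n.ball.radius_pos)
    rw [lt_min_iff] at hcr
    exact ⟨c.ball, ⟨c, ⟨hcl, hcP.trans inter_subset_left, hcr.2.le, σ n.level,
      fun τ hτ => (hcP hτ).2⟩, rfl⟩, hcr.1, hxc⟩
  obtain ⟨I, hI, hsep, hfrost, hsum⟩ := n.rich (⋃ v, Q v) (.iUnion_nat hQ) _ hfine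
  obtain ⟨J, hJN, hinj, rfl⟩ := Finset.exists_subset_injOn_image_eq_of_surjOn _ _ hI
  have hsum_ball : ∀ J' ⊆ J, ∑ p ∈ J'.image Node.ball, h p.radius = ∑ c ∈ J', h c.ball.radius :=
    fun J' hJ' => Finset.sum_image (hinj.mono (Finset.coe_subset.2 hJ'))
  exact ⟨{
    children := J
    level_eq := fun c hc => (hJN hc).1
    piece_subset := fun c hc => (hJN hc).2.1
    radius_le := fun c hc => (hJN hc).2.2.1
    exists_value := fun c hc => (hJN hc).2.2.2
    separated := fun c hc d hd hcd => hsep (Finset.mem_image_of_mem _ hc)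
      (Finset.mem_image_of_mem _ hd) (hinj.ne hc hd hcd)
    sum_touching_le := fun s J' hJ' htouch => by
      rw [← hsum_ball J' hJ']
      exact hfrost s _ (Finset.coe_subset.2 (Finset.image_subset_image hJ'))
        (Finset.forall_mem_image.2 htouch)
    le_sum := hsum.trans_eq (hsum_ball J subset_rfl) }⟩

end Existence

/-! ### The limit set of a tree -/

section LimitSet

variable {Z : Type*} [MetricSpace Z] [MeasurableSpace Z] {h : ℝ≥0 → ℝ≥0∞} {A ρ : ℝ≥0}
  {g : (ℕ → ℕ) → Z} {m : Measure Z} {T : ∀ n : Node h A ρ g m, Refinement n}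
  {n : Node h A ρ g m}

/-- The union of the pieces of the `j`-th generation below the node `n`. -/
def stage (T : ∀ n : Node h A ρ g m, Refinement n) (n : Node h A ρ g m) (j : ℕ) : Set (ℕ → ℕ) :=
  ⋃ d ∈ descendants T j n, d.piece

/-- The limit set of the tree below the node `n`. -/
def limitSet (T : ∀ n : Node h A ρ g m, Refinement n) (n : Node h A ρ g m) : Set Z :=
  g '' ⋂ j, closure (stage T n j)

theorem antitone_stage : Antitone (stage T n) := by
  refine antitone_nat_of_succ_le fun j => iUnion₂_subset fun d hd => ?_
  obtain ⟨e, he, hde⟩ := exists_parent_of_mem_descendants hd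
  exact ((T e).piece_subset d hde).trans (subset_biUnion_of_mem (u := Node.piece) he)

theorem exists_forall_mem_stage_le (hn : n.level = 0) :
    ∃ b : ℕ → ℕ, ∀ j, ∀ σ ∈ stage T n (j + 1), σ j ≤ b j := by
  have hvalue : ∀ j, ∀ d ∈ descendants T (j + 1) n, ∃ v, ∀ σ ∈ d.piece, σ j = v := by
    intro j d hd
    obtain ⟨e, he, hde⟩ := exists_parent_of_mem_descendants hd
    have hlevel : e.level = j := by rw [level_of_mem_descendants he, hn, zero_add]
    exact hlevel ▸ (T e).exists_value d hde
  choose! v hv using hvalue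
  refine ⟨fun j => ∑ d ∈ descendants T (j + 1) n, v j d, fun j σ hσ => ?_⟩
  obtain ⟨d, hd, hσd⟩ := mem_iUnion₂.1 hσ
  rw [hv j d hd σ hσd]
  exact Finset.single_le_sum_of_canonicallyOrdered (f := v j) hd

theorem isCompact_limitSet (hg : Continuous g) (hn : n.level = 0) : IsCompact (limitSet T n) :=
  let ⟨_, hb⟩ := exists_forall_mem_stage_le hn
  (isCompact_iInter_closure hb).image hg

theorem limitSet_subset_biUnion_carrier (hg : Continuous g) (j : ℕ) :
    limitSet T n ⊆ ⋃ d ∈ descendants T j n, d.ball.carrier := by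
  have hclosed : IsClosed (⋃ d ∈ descendants T j n, d.ball.carrier) :=
    (descendants T j n).finite_toSet.isClosed_biUnion fun d _ => d.ball.isClosed_carrier
  have hmaps : MapsTo g (stage T n j) (⋃ d ∈ descendants T j n, d.ball.carrier) := fun σ hσ => by
    obtain ⟨d, hd, hσd⟩ := mem_iUnion₂.1 hσ
    exact mem_iUnion₂.2 ⟨d, hd, d.mapsTo hσd⟩
  rintro _ ⟨σ, hσ, rfl⟩
  exact hmaps.closure_left hg hclosed (mem_iInter.1 hσ j)

theorem measure_limitSet_eq_zero (hpos : ∀ t, 0 < t → 0 < h t) (hg : Continuous g) (hA : 1 ≤ A)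
    (hn : n.level = 0) (hn_top : h n.ball.radius ≠ ⊤) : m (limitSet T n) = 0 := by
  have hle : ∀ j : ℕ, m (limitSet T n) ≤ 2⁻¹ ^ j * h n.ball.radius := fun j =>
    calc m (limitSet T n)
        ≤ m (⋃ d ∈ descendants T j n, d.ball.carrier) :=
          measure_mono (limitSet_subset_biUnion_carrier hg j)
      _ ≤ ((2 * A) ^ (n.level + j))⁻¹ * (A ^ j * h n.ball.radius) :=
          measure_biUnion_descendants_le hpos j n
      _ = 2⁻¹ ^ j * h n.ball.radius := by
          have hA0 : A ≠ 0 := (one_pos.trans_le hA).ne'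
          have hcoeff : ((2 * A) ^ (n.level + j))⁻¹ * A ^ j = 2⁻¹ ^ j := by
            rw [hn, zero_add, mul_pow, mul_inv, mul_assoc, inv_mul_cancel₀ (pow_ne_zero j hA0),
              mul_one, inv_pow]
          rw [← mul_assoc, ← ENNReal.coe_two, ← ENNReal.coe_inv two_ne_zero, ← ENNReal.coe_pow,
            ← ENNReal.coe_pow, ← ENNReal.coe_mul, hcoeff]
  have hlim : Tendsto (fun j : ℕ => 2⁻¹ ^ j * h n.ball.radius) atTop (𝓝 (0 * h n.ball.radius)) :=
    ENNReal.Tendsto.mul_const (ENNReal.tendsto_pow_atTop_nhds_zero_of_lt_one (by norm_num))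
      (Or.inr hn_top)
  rw [zero_mul] at hlim
  exact le_antisymm (ge_of_tendsto' hlim hle) bot_le

theorem le_mul_sum_of_limitSet_subset (hmono : Monotone h) (hpos : ∀ t, 0 < t → 0 < h t)
    (hg : Continuous g) (hA : 1 ≤ A) (hn : n.level = 0) {F : Finset (Ball Z)}
    (hF : limitSet T n ⊆ ⋃ b ∈ F, Metric.ball b.center b.radius) :
    h n.ball.radius ≤ A * ∑ b ∈ F, h b.radius := by
  obtain ⟨_, hb⟩ := exists_forall_mem_stage_le (T := T) hn
  have hopen : IsOpen (⋃ b ∈ F, Metric.ball b.center b.radius) :=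
    isOpen_biUnion fun _ _ => Metric.isOpen_ball
  obtain ⟨i, hi⟩ := exists_subset_of_iInter_closure_subset antitone_stage hb
    (hopen.preimage hg) (image_subset_iff.1 hF)
  have hsmall : ∀ᶠ j : ℕ in atTop, ∀ b ∈ F, 1 / ((j : ℝ≥0) + 1) ≤ b.radius :=
    (F.eventually_all).2 fun b _ =>
      tendsto_one_div_add_atTop_nhds_zero_nat.eventually_le_const b.radius_pos
  obtain ⟨j, hj, hij⟩ := (hsmall.and (eventually_ge_atTop i)).exists
  refine le_mul_sum_of_forall_descendants (T := T) hmono hA j n (fun d hd => ?_) fun d hd b hb => ?_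
  · obtain ⟨σ, hσ⟩ := d.piece_nonempty hpos
    obtain ⟨b, hb, hσb⟩ := mem_iUnion₂.1 (hi (antitone_stage hij (mem_iUnion₂.2 ⟨d, hd, hσ⟩)))
    exact ⟨b, hb, g σ, mem_image_of_mem g hσ, Metric.ball_subset_closedBall hσb⟩
  · have hlevel : d.level = j := by rw [level_of_mem_descendants hd, hn, zero_add]
    exact d.radius_le_inv.trans (hlevel ▸ hj b hb)

theorem le_mul_hausdorffPre_limitSet [TopologicalSpace.SeparableSpace Z] [Nonempty Z]
    (hG : ContinuousGauge h) (hg : Continuous g) (hA : 1 ≤ A) (hn : n.level = 0) (δ : ℝ≥0) :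
    h n.ball.radius ≤ A * hausdorffPre h δ (limitSet T n) := by
  classical
  have hA0 : (A : ℝ≥0∞) ≠ 0 := by exact_mod_cast (one_pos.trans_le hA).ne'
  by_contra! hlt
  rw [mul_comm, ← ENNReal.lt_div_iff_mul_lt (.inl hA0) (.inl ENNReal.coe_ne_top)] at hlt
  obtain ⟨p, -, hcover, hsum⟩ := exists_rational_cover hG.continuous hG.map_zero hlt
  obtain ⟨F, hF⟩ := (isCompact_limitSet hg hn).elim_finite_subcover _
    (fun i => Metric.isOpen_ball) hcover
  have hmass : h n.ball.radius ≤ A * ∑ b ∈ F.image p, h b.radius :=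
    le_mul_sum_of_limitSet_subset hG.mono hG.pos hg hA hn (by rwa [Finset.set_biUnion_finset_image])
  refine hmass.not_gt ?_
  rw [mul_comm, ← ENNReal.lt_div_iff_mul_lt (.inl hA0) (.inl ENNReal.coe_ne_top)]
  exact (Finset.sum_image_le_of_nonneg fun _ _ => bot_le).trans_lt
    ((ENNReal.sum_le_tsum F).trans_lt hsum)

end LimitSet

theorem exists_isCompact_measure_eq_zero_hausdorffM_pos {Z : Type*} [MetricSpace Z]
    [TopologicalSpace.SeparableSpace Z] [Nonempty Z] [MeasurableSpace Z] [BorelSpace Z]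
    {h : ℝ≥0 → ℝ≥0∞} {g : (ℕ → ℕ) → Z} (hG : ContinuousGauge h) (V : VitaliSystem Z h)
    (hg : Continuous g) (hrange : ¬ HasSigmaFiniteCover (hausdorffM h) (range g))
    (m : Measure Z) [IsFiniteMeasure m] :
    ∃ K ⊆ range g, IsCompact K ∧ m K = 0 ∧ 0 < hausdorffM h K := by
  obtain ⟨n, hn⟩ := exists_node_level_zero (m := m) hG V hrange
  let T : ∀ n : Node h V.frostmanConst V.scale g m, Refinement n :=
    fun n => (nonempty_refinement hG V n).some
  have hA : 1 ≤ V.frostmanConst := le_add_self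
  have hn_top : h n.ball.radius ≠ ⊤ := ne_top_of_le_ne_top V.map_scale_ne_top (hG.mono n.radius_le)
  refine ⟨limitSet T n, image_subset_range _ _, isCompact_limitSet hg hn,
    measure_limitSet_eq_zero hG.pos hg hA hn hn_top, ?_⟩
  have hmass := le_mul_hausdorffPre_limitSet (T := T) hG hg hA hn 1
  have hpre : 0 < hausdorffPre h 1 (limitSet T n) := by
    by_contra! hle
    rw [le_bot_iff.1 hle] at hmass
    exact (hG.pos _ n.ball.radius_pos).ne' (by simpa using hmass)
  exact hpre.trans_le (hausdorffPre_le_hausdorffM one_pos _)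

/-! ### Null preimages of compact sets -/

theorem sigmaFiniteSet_of_hasSigmaFiniteCover {Z : Type*} [MetricSpace Z] {h : ℝ≥0 → ℝ≥0∞}
    {Y : Set Z} (hY : AnalyticSet Y) (hcover : HasSigmaFiniteCover (hausdorffM h) Y) :
    SigmaFiniteSet (hausdorffM h) Y := by
  borelize Z
  let M : Measure Z := Measure.mkMetric fun d => h d.toNNReal
  have hM : ∀ s, M s = hausdorffM h s := fun s => by
    rw [← Measure.coe_toOuterMeasure, Measure.mkMetric_toOuterMeasure, hausdorffM]
  obtain ⟨A, hA, hA_top⟩ := hcover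
  have hB : ∀ n, M (toMeasurable M (A n)) < ⊤ := fun n => by
    rw [measure_toMeasurable, hM]
    exact hA_top n
  refine ⟨fun n => Y ∩ toMeasurable M (A n), fun n => ⟨fun t => ?_, ?_⟩, ?_⟩
  · have : IsFiniteMeasure (M.restrict (toMeasurable M (A n))) :=
      ⟨by rw [Measure.restrict_apply_univ]; exact hB n⟩
    have hnull : NullMeasurableSet (Y ∩ toMeasurable M (A n)) M :=
      (nullMeasurableSet_restrict (measurableSet_toMeasurable _ _).nullMeasurableSet).1
        (nullMeasurableSet_of_analyticSet hY)
    simpa only [hM] using (measure_inter_add_sdiff₀ t hnull).symm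
  · rw [← hM]
    exact (measure_mono inter_subset_right).trans_lt (hB n)
  · rw [← inter_iUnion]
    exact (inter_eq_left.2 (hA.trans (iUnion_mono fun n => subset_toMeasurable _ _))).symm

theorem exists_isFiniteMeasure_preimage_eq_zero {X Z : Type*} [TopologicalSpace Z]
    [MeasurableSpace Z] [BorelSpace Z] {μ : OuterMeasure X} (hμ : SigmaFiniteSet μ univ)
    {f : X → Z} (hf : ∀ O, IsOpen O → μ.IsCaratheodory (f ⁻¹' O)) :
    ∃ m : Measure Z, IsFiniteMeasure m ∧ ∀ B, MeasurableSet B → m B = 0 → μ (f ⁻¹' B) = 0 := by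
  let _ : MeasurableSpace X := μ.caratheodory
  have hM : ∀ {s}, μ.IsCaratheodory s → μ.toMeasure le_rfl s = μ s := fun hs =>
    toMeasure_apply μ le_rfl hs
  have hf_meas : Measurable f := measurable_of_isOpen hf
  obtain ⟨A, hA, hA_univ⟩ := hμ
  have : SigmaFinite (μ.toMeasure le_rfl) :=
    ⟨⟨⟨A, fun _ => trivial, fun n => (hM (hA n).1).trans_lt (hA n).2, hA_univ.symm⟩⟩⟩
  refine ⟨(μ.toMeasure le_rfl).toFinite.map f, inferInstance, fun B hB hB0 => ?_⟩
  rwa [Measure.map_apply hf_meas hB, toFinite_apply_eq_zero_iff,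
    hM (hf_meas hB)] at hB0

theorem exists_isCompact_preimage_eq_zero_hausdorffM_pos {X Z : Type*} [MetricSpace Z]
    [TopologicalSpace.SeparableSpace Z] {h : ℝ≥0 → ℝ≥0∞} {Y : Set Z} {μ : OuterMeasure X}
    {f : X → Z} (hG : ContinuousGauge h) (hV : Nonempty (VitaliSystem Z h)) (hY : AnalyticSet Y)
    (hYσ : ¬ SigmaFiniteSet (hausdorffM h) Y) (hμ : SigmaFiniteSet μ univ)
    (hf : ∀ O, IsOpen O → μ.IsCaratheodory (f ⁻¹' O)) :
    ∃ K ⊆ Y, IsCompact K ∧ μ (f ⁻¹' K) = 0 ∧ 0 < hausdorffM h K := by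
  have hcover : ¬ HasSigmaFiniteCover (hausdorffM h) Y :=
    mt (sigmaFiniteSet_of_hasSigmaFiniteCover hY) hYσ
  obtain ⟨V⟩ := hV
  borelize Z
  obtain ⟨m, _, hm⟩ := exists_isFiniteMeasure_preimage_eq_zero hμ hf
  rw [AnalyticSet] at hY
  rcases hY with rfl | ⟨g, hg, rfl⟩
  · exact absurd .empty hcover
  have : Nonempty Z := ⟨g 0⟩
  obtain ⟨K, hKY, hK, hK0, hKpos⟩ :=
    exists_isCompact_measure_eq_zero_hausdorffM_pos hG V hg hcover m
  exact ⟨K, hKY, hK, hm K hK.measurableSet hK0, hKpos⟩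

/-! ### Perfect null sets -/

theorem perfectSet_of_perfect {X : Type*} [TopologicalSpace X] [T1Space X] {D : Set X}
    (hD : Perfect D) : PerfectSet D :=
  ⟨hD.closed, fun _ hO ⟨x, hxO, hxD⟩ =>
    .of_accPt ((hD.acc x hxD).nhds_inter (hO.mem_nhds hxO))⟩

theorem exists_perfectSet_subset_hausdorffM_image_pos {X Z : Type*} [TopologicalSpace X]
    [SecondCountableTopology X] [T1Space X] [MetricSpace Z] {h : ℝ≥0 → ℝ≥0∞} (h0 : h 0 = 0)
    {f : X → Z} {C : ℕ → Set X} (hC : ∀ n, IsClosed (C n))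
    (hpos : 0 < hausdorffM h (f '' ⋃ n, C n)) :
    ∃ D ⊆ ⋃ n, C n, PerfectSet D ∧ 0 < hausdorffM h (f '' D) := by
  choose V D hV hD hVD using fun n => exists_countable_union_perfect_of_isClosed (hC n)
  obtain ⟨n, hn⟩ : ∃ n, 0 < hausdorffM h (f '' D n) := by
    by_contra! hzero
    have hnull : ∀ n, hausdorffM h (f '' C n) = 0 := fun n => by
      rw [hVD n, image_union]
      exact measure_union_null (hausdorffM_countable h0 ((hV n).image f)) (le_bot_iff.1 (hzero n))
    rw [image_iUnion, measure_iUnion_null hnull] at hpos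
    exact hpos.false
  have hDC : D n ⊆ C n := (hVD n).symm ▸ subset_union_right
  exact ⟨D n, hDC.trans (subset_iUnion C n), perfectSet_of_perfect (hD n), hn⟩

end HausdorffGauge

open HausdorffGauge in
theorem statement_5_general {X Z : Type*} [TopologicalSpace X] [MetricSpace Z]
    [TopologicalSpace.SeparableSpace Z] {μ : OuterMeasure X} (hμ : SigmaFiniteSet μ univ)
    {Y : Set Z} (hY : AnalyticSet Y) {h : ℝ≥0 → ℝ≥0∞} (hh : IsHausdorffFunction h)
    (hcont : Continuous h) (h0 : h 0 = 0)
    (halt : FiniteOrder h ∨ FiniteStructuralDim Z ∨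
      ∀ x y z : Z, dist x z ≤ max (dist x y) (dist y z))
    (hYσ : ¬ SigmaFiniteSet (hausdorffM h) Y) {f : X → Z} (hYf : Y ⊆ range f)
    (hf : ∀ O, IsOpen O → μ.IsCaratheodory (f ⁻¹' O)) :
    (∃ N : Set X, μ N = 0 ∧ 0 < hausdorffM h (f '' N)) ∧
    (SecondCountableTopology X → T1Space X →
      (∀ K : Set Z, IsCompact K →
        ∃ C : ℕ → Set X, (∀ n, IsClosed (C n)) ∧ f ⁻¹' K = ⋃ n, C n) →
      ∃ N : Set X, PerfectSet N ∧ μ N = 0 ∧ 0 < hausdorffM h (f '' N)) := by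
  have hG : ContinuousGauge h := ⟨hh, hcont, h0⟩
  obtain ⟨K, hKY, hK, hK0, hKpos⟩ := exists_isCompact_preimage_eq_zero_hausdorffM_pos hG
    (nonempty_vitaliSystem hG halt) hY hYσ hμ hf
  rw [← image_preimage_eq_of_subset (hKY.trans hYf)] at hKpos
  refine ⟨⟨f ⁻¹' K, hK0, hKpos⟩, fun _ _ hpre => ?_⟩
  obtain ⟨C, hC, hKC⟩ := hpre K hK
  rw [hKC] at hK0 hKpos
  obtain ⟨D, hDC, hD, hDpos⟩ := exists_perfectSet_subset_hausdorffM_image_pos h0 hC hKpos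
  exact ⟨D, hD, measure_mono_null hDC hK0, hDpos⟩

/-- Theorem `GeneralResult`. -/
theorem statement_5 {X : Type*} [TopologicalSpace X] {Z : Type*} [MetricSpace Z]
    (μ : MeasureTheory.OuterMeasure X)
    (hBorel : ∀ B : Set X, MeasurableSet[borel X] B → μ.IsCaratheodory B)
    (hsf : SigmaFiniteSet μ (Set.univ : Set X))
    (Y : Set Z) (h : ℝ≥0 → ℝ≥0∞) (hH : PropertyHInf Y h)
    (f : X → Z) (hrange : Set.range f = Y)
    (hmeas : ∀ O : Set Z, IsOpen O → μ.IsCaratheodory (f ⁻¹' O)) :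
    (∃ N : Set X, μ N = 0 ∧ 0 < hausdorffM h (f '' N)) ∧
    (SecondCountableTopology X → T1Space X →
      (∀ F : Set Z, IsClosed F →
        ∃ C : ℕ → Set X, (∀ n, IsClosed (C n)) ∧ f ⁻¹' F = ⋃ n, C n) →
      ∃ N : Set X, PerfectSet N ∧ μ N = 0 ∧ 0 < hausdorffM h (f '' N)) := by
  obtain ⟨⟨-, _, hY, hh, hcont, h0, halt⟩, hYσ⟩ := hH
  exact (statement_5_general hsf hY hh hcont h0 halt hYσ hrange.ge hmeas).imp_right
    fun H hX hT hF => H hX hT fun K hK => hF K hK.isClosed
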